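/- Theorem (f-polynomial of a DA): Let A be a dehyperplane arrangement in an n-simanifold T. Then f_A(x) = (−1)^{rk A} M_A(−x, −1), where f_A(x) = Σ_{i=0}^n f_i(A) x^{n−i} is the f-polynomial and M_A(x,y) = Σ_{X,Y ∈ L_A} μ(X,Y) x^{rk X} y^{rk A − rk Y} is the Möbius polynomial. -/

import Mathlib

open Set

noncomputable section

/-- The ambient Euclidean space `ℝ^N`. -/
abbrev Euc (N : ℕ) := EuclideanSpace ℝ (Fin N)

/-- An `i`-simanifold: a nonempty (open, i.e. boundaryless) contractible topological
`i`-manifold, realized as a subset of the ambient space. -/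
def IsSimanifold {N : ℕ} (i : ℕ) (S : Set (Euc N)) : Prop :=
  S.Nonempty ∧ ContractibleSpace S ∧ Nonempty (ChartedSpace (EuclideanSpace ℝ (Fin i)) S)

/-- A dehyperplane in an `n`-simanifold `T`: an `(n-1)`-simanifold `P ⊆ T` cutting `T`
into two `n`-simanifolds `plus` and `minus`, with `plus ⊔ P ⊔ minus = T` and
`closure plus ∩ closure minus = P`. -/
structure Dehyperplane (N n : ℕ) (T : Set (Euc N)) where
  P : Set (Euc N)
  plus : Set (Euc N)
  minus : Set (Euc N)
  simP : IsSimanifold (n - 1) P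
  simPlus : IsSimanifold n plus
  simMinus : IsSimanifold n minus
  union_eq : plus ∪ P ∪ minus = T
  disj_pP : Disjoint plus P
  disj_pm : Disjoint plus minus
  disj_Pm : Disjoint P minus
  closure_eq : closure plus ∩ closure minus = P

/-- `L_A`: the set of nonempty intersections of elements of `A` (empty intersection `T`),
the flats of `A`. (Ordered by reverse inclusion: `X ≤ Y ↔ Y ⊆ X`.) -/
def flats {N n : ℕ} {T : Set (Euc N)} (A : Set (Dehyperplane N n T)) : Set (Set (Euc N)) :=
  {X | X.Nonempty ∧ ∃ B ⊆ A, X = T ∩ ⋂ P ∈ B, P.P}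

/-- A dehyperplane arrangement (DA) in the `n`-simanifold `T`. -/
def IsDA {N : ℕ} (n : ℕ) (T : Set (Euc N)) (A : Set (Dehyperplane N n T)) : Prop :=
  A.Finite ∧ ∀ P ∈ A, ∀ X ∈ flats A, (P.P ∩ X).Nonempty →
    X ⊆ P.P ∨ ∃ i, 1 ≤ i ∧ i ≤ n ∧ IsSimanifold (i - 1) (P.P ∩ X) ∧
      IsSimanifold i (P.plus ∩ X) ∧ IsSimanifold i (P.minus ∩ X)

/-- `P^ε` for a sign `ε ∈ {+,0,-}`. -/
def Dehyperplane.part {N n : ℕ} {T : Set (Euc N)} (P : Dehyperplane N n T) :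
    SignType → Set (Euc N)
  | .pos => P.plus
  | .zero => P.P
  | .neg => P.minus

/-- A face of `A`: a nonempty set of the form `⋂_{P ∈ A} P^{ε_P}`. -/
def IsFace {N n : ℕ} {T : Set (Euc N)} (A : Set (Dehyperplane N n T))
    (F : Set (Euc N)) : Prop :=
  F.Nonempty ∧ ∃ ε : Dehyperplane N n T → SignType, F = T ∩ ⋂ P ∈ A, P.part (ε P)

/-- A chamber of `A`: a face with `ε_P ≠ 0` for all `P ∈ A`. -/
def IsChamber {N n : ℕ} {T : Set (Euc N)} (A : Set (Dehyperplane N n T))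
    (F : Set (Euc N)) : Prop :=
  F.Nonempty ∧ ∃ ε : Dehyperplane N n T → SignType,
    (∀ P ∈ A, ε P ≠ 0) ∧ F = T ∩ ⋂ P ∈ A, P.part (ε P)

/-- The restriction `A^X = {P ∩ X | P ∈ A, X ⊄ P, P ∩ X ≠ ∅}`, as dehyperplanes in `X`
(viewed as an `m`-simanifold), with halves `P^± ∩ X`. -/
def restrict {N n : ℕ} {T : Set (Euc N)} (A : Set (Dehyperplane N n T)) (m : ℕ)
    (X : Set (Euc N)) : Set (Dehyperplane N m X) :=
  {Q | ∃ P ∈ A, ¬ X ⊆ P.P ∧ (P.P ∩ X).Nonempty ∧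
    Q.P = P.P ∩ X ∧ Q.plus = P.plus ∩ X ∧ Q.minus = P.minus ∩ X}

/-- The dimension of a subset of `ℝ^N`: the largest `i` such that `S` contains an
`i`-simanifold. -/
def sdim {N : ℕ} (S : Set (Euc N)) : ℕ :=
  sSup {i | ∃ T : Set (Euc N), IsSimanifold i T ∧ T ⊆ S}

/-!
The faces of `A` spanning a flat `X` are the chambers of `A^X`, so the coefficients of `f_A` are
sums of such chamber counts. These are computed by Möbius inversion from the Euler relation
`∑ (-1) ^ dim F = (-1) ^ dim Y`, the sum being over the faces `F` contained in a flat `Y`.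

The Euler relation follows by adding the dehyperplanes one at a time, because a dehyperplane that
has points of a cell of a flat on both sides also meets that cell. In a minimal counterexample to
this crossing property, connectedness of the half-flats yields two facets of the cell on one side of
the dehyperplane and a third on the other. A point of the dehyperplane common to the third facet and
one of the others would then lie on the remaining one too, which is impossible. That every point of
`P ∩ X` lies in the closure of both halves of `X`, and that dimension is well defined, are local
consequences of Brouwer's no-retraction theorem.
-/

/-! ### Brouwer's theorem and invariance of dimension -/

section NoRetraction

open MeasureTheory Metric
open scoped NNReal

theorem exists_polynomial_eval_eq_det_one_add_smul {K V : Type*} [Field K] [AddCommGroup V]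
    [Module K V] [FiniteDimensional K V] (f : V →ₗ[K] V) :
    ∃ p : Polynomial K, p.natDegree ≤ Module.finrank K V ∧
      ∀ s, LinearMap.det (1 + s • f) = p.eval s := by
  set b := Module.finBasis K V
  set A := LinearMap.toMatrix b b f
  refine ⟨Matrix.det ((Polynomial.X : Polynomial K) • A.map Polynomial.C +
    (1 : Matrix _ _ K).map Polynomial.C), ?_, fun s => ?_⟩
  · simpa using Polynomial.natDegree_det_X_add_C_le A 1
  · rw [← LinearMap.det_toMatrix b, ← Polynomial.coe_evalRingHom, RingHom.map_det]
    congr 1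
    ext i j
    simp only [map_add, LinearMap.toMatrix_one, map_smul, Matrix.add_apply, Matrix.smul_apply,
      smul_eq_mul, RingHom.mapMatrix_apply, Matrix.map_apply, Polynomial.coe_evalRingHom,
      Polynomial.eval_mul, Polynomial.eval_X, Polynomial.eval_C, A]
    ring

/-- The weights are those of Lagrange interpolation at the nodes `t i`, evaluated at `1`. -/
theorem exists_weights_det_one_add (K V : Type*) [Field K] [AddCommGroup V] [Module K V]
    [FiniteDimensional K V] {t : Fin (Module.finrank K V + 1) → K} (ht : t.Injective) :
    ∃ c : Fin (Module.finrank K V + 1) → K, ∑ i, c i = 1 ∧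
      ∀ f : V →ₗ[K] V, LinearMap.det (1 + f) = ∑ i, c i * LinearMap.det (1 + t i • f) := by
  refine ⟨fun i => (Lagrange.basis Finset.univ t i).eval 1, ?_, fun f => ?_⟩
  · have hsum := Lagrange.sum_basis (s := Finset.univ) (v := t) ht.injOn ⟨0, by simp⟩
    rw [← Polynomial.eval_finsetSum, hsum, Polynomial.eval_one]
  · obtain ⟨p, hdeg, hp⟩ := exists_polynomial_eval_eq_det_one_add_smul f
    have hlt : p.degree < (Finset.univ : Finset (Fin (Module.finrank K V + 1))).card := by
      rw [Finset.card_univ, Fintype.card_fin]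
      exact Polynomial.degree_le_natDegree.trans_lt (mod_cast Nat.lt_succ_of_le hdeg)
    have h1 := hp 1
    rw [one_smul] at h1
    rw [h1, Lagrange.eq_interpolate (s := Finset.univ) (v := t) ht.injOn hlt,
      Lagrange.interpolate_apply, Polynomial.eval_finsetSum]
    refine Finset.sum_congr rfl fun i _ => ?_
    rw [Polynomial.eval_mul, Polynomial.eval_C, hp, mul_comm]

theorem nonempty_inter_frontier_of_isPreconnected {X : Type*} [TopologicalSpace X] {s t : Set X}
    (ht : IsPreconnected t) (h₁ : (t ∩ s).Nonempty) (h₂ : (t \ s).Nonempty) :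
    (t ∩ frontier s).Nonempty := by
  by_contra hempty
  obtain ⟨x, hx⟩ := h₁
  obtain ⟨y, hy⟩ := h₂
  have hcover : t ⊆ interior s ∪ (closure s)ᶜ := fun z hz => by
    by_contra hz'
    rw [mem_union, not_or, mem_compl_iff, not_not] at hz'
    exact hempty ⟨z, hz, hz'.2, hz'.1⟩
  obtain ⟨z, -, hz, hz'⟩ := ht _ _ isOpen_interior isClosed_closure.isOpen_compl hcover
    ⟨x, hx.1, (hcover hx.1).resolve_right fun h => h (subset_closure hx.2)⟩
    ⟨y, hy.1, (hcover hy.1).resolve_left fun h => hy.2 (interior_subset h)⟩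
  exact hz' (interior_subset_closure hz)

theorem lipschitzWith_indicator {E F : Type*} [NormedAddCommGroup E] [NormedSpace ℝ E]
    [SeminormedAddCommGroup F] {s : Set E} (hs : IsClosed s) {K : ℝ≥0} {g : E → F}
    (hg : LipschitzOnWith K g s) (h0 : ∀ x ∈ frontier s, g x = 0) :
    LipschitzWith K (s.indicator g) := by
  have key : ∀ x ∈ s, ∀ y ∉ s, dist (g x) 0 ≤ K * dist x y := by
    intro x hx y hy
    obtain ⟨z, hz, hzs⟩ := nonempty_inter_frontier_of_isPreconnected (s := s)
      (convex_segment (𝕜 := ℝ) x y).isPreconnected ⟨x, left_mem_segment ℝ x y, hx⟩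
      ⟨y, right_mem_segment ℝ x y, hy⟩
    have hxz : dist x z ≤ dist x y := by
      linarith [dist_add_dist_of_mem_segment hz, dist_nonneg (x := z) (y := y)]
    rw [← h0 z hzs]
    exact (hg.dist_le_mul x hx z (hs.frontier_subset hzs)).trans (by gcongr)
  refine LipschitzWith.of_dist_le_mul fun x y => ?_
  by_cases hx : x ∈ s <;> by_cases hy : y ∈ s
  · simpa only [indicator_of_mem, hx, hy] using hg.dist_le_mul x hx y hy
  · simpa only [indicator_of_mem hx, indicator_of_notMem hy] using key x hx y hy
  · simpa only [indicator_of_notMem hx, indicator_of_mem hy, dist_comm] using key y hy x hx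
  · simpa only [indicator_of_notMem hx, indicator_of_notMem hy, dist_self] using by positivity

variable {E : Type*} [NormedAddCommGroup E] [NormedSpace ℝ E] [FiniteDimensional ℝ E]

theorem det_id_add_pos {M : E →L[ℝ] E} (hM : ‖M‖ < 1) :
    0 < (ContinuousLinearMap.id ℝ E + M).det := by
  have hne : ∀ s ∈ Icc (0 : ℝ) 1, (ContinuousLinearMap.id ℝ E + s • M).det ≠ 0 := by
    intro s hs
    have hsM : ‖-(s • M)‖ < 1 := by
      rw [norm_neg, norm_smul, Real.norm_of_nonneg hs.1]
      nlinarith [hs.1, hs.2, norm_nonneg M]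
    have hunit : IsUnit (ContinuousLinearMap.id ℝ E + s • M) := by
      simpa only [sub_neg_eq_add] using! isUnit_one_sub_of_norm_lt_one hsM
    exact ((hunit.map (ContinuousLinearMap.toLinearMapRingHom (R₁ := ℝ) (M₁ := E))).map
      LinearMap.det).ne_zero
  by_contra! hdet
  have hcont : ContinuousOn (fun s : ℝ => (ContinuousLinearMap.id ℝ E + s • M).det) (Icc 0 1) :=
    (ContinuousLinearMap.continuous_det.comp (by fun_prop)).continuousOn
  obtain ⟨s, hs, hs0⟩ := intermediate_value_Icc' zero_le_one hcont
    (show (0 : ℝ) ∈ Icc _ _ from ⟨by simpa using hdet, by simp [ContinuousLinearMap.det]⟩)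
  exact hne s hs hs0

theorem bijective_add_of_lipschitzWith {K : ℝ≥0} (hK : K < 1) {g : E → E}
    (hg : LipschitzWith K g) : (fun x => x + g x).Bijective := by
  have happrox : ApproximatesLinearOn (fun x => x + g x)
      (ContinuousLinearEquiv.refl ℝ E : E →L[ℝ] E) univ K := by
    intro x _ y _
    have hsub : x + g x - (y + g y) - (ContinuousLinearEquiv.refl ℝ E : E →L[ℝ] E) (x - y) =
        g x - g y := by
      simp only [ContinuousLinearEquiv.coe_refl, ContinuousLinearMap.coe_id', id_eq]
      abel
    rw [hsub, ← dist_eq_norm, ← dist_eq_norm]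
    exact hg.dist_le_mul x y
  have hK' : Subsingleton E ∨
      K < ‖((ContinuousLinearEquiv.refl ℝ E).symm : E →L[ℝ] E)‖₊⁻¹ := by
    rcases subsingleton_or_nontrivial E with hE | hE
    · exact Or.inl hE
    · exact Or.inr (by simpa using hK)
  exact ⟨injOn_univ.1 (happrox.injOn hK'), happrox.surjective hK'⟩

theorem image_eq_of_bijective_of_eqOn_compl {α : Type*} {f : α → α} (hf : f.Bijective) {s : Set α}
    (h : EqOn f id sᶜ) : f '' s = s := by
  rw [← compl_inj_iff, ← image_compl_eq hf, h.image_eq, image_id]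

variable [MeasurableSpace E] [BorelSpace E] (μ : Measure E) [μ.IsAddHaarMeasure] {g : E → E}
  {R : ℝ}

/-- For small `t` the map `id + t • g` permutes the ball and has positive Jacobian, so that
the integral is the volume of its image. -/
theorem integral_det_id_add_smul_fderiv (hg : Differentiable ℝ g) {K : ℝ≥0}
    (hK : ∀ x ∈ closedBall 0 R, ‖fderiv ℝ g x‖₊ ≤ K) (h0 : ∀ x ∈ sphere 0 R, g x = 0)
    {t : ℝ≥0} (htK : t * K < 1) :
    ∫ x in ball 0 R, (ContinuousLinearMap.id ℝ E + t • fderiv ℝ g x).det ∂μ =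
      μ.real (ball 0 R) := by
  set G : E → E := (closedBall 0 R).indicator (fun x => t • g x)
  have hGlip : LipschitzWith (t * K) G := by
    refine lipschitzWith_indicator isClosed_closedBall ?_ fun x hx => ?_
    · have hlip := (convex_closedBall (0 : E) R).lipschitzOnWith_of_nnnorm_fderiv_le
        (fun x _ => hg x) hK
      refine .of_dist_le_mul fun x hx y hy => ?_
      rw [NNReal.smul_def, NNReal.smul_def, dist_smul₀, NNReal.norm_eq, NNReal.coe_mul, mul_assoc]
      gcongr
      exact hlip.dist_le_mul x hx y hy
    · rw [h0 x (frontier_closedBall_subset_sphere hx), smul_zero]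
  have hbij : (fun x => x + G x).Bijective := bijective_add_of_lipschitzWith htK hGlip
  have himage : (fun x => x + G x) '' ball 0 R = ball 0 R := by
    refine image_eq_of_bijective_of_eqOn_compl hbij fun x hx => ?_
    by_cases hxR : x ∈ closedBall 0 R
    · have hx0 : g x = 0 := h0 x ((mem_closedBall.1 hxR).antisymm (by simpa using hx))
      simp [G, hx0]
    · simp [G, indicator_of_notMem hxR]
  have hderiv : ∀ x ∈ ball (0 : E) R, HasFDerivWithinAt (fun x => x + G x)
      (ContinuousLinearMap.id ℝ E + t • fderiv ℝ g x) (ball 0 R) x := by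
    intro x hx
    refine ((hasFDerivAt_id x).add ((hg x).hasFDerivAt.const_smul t)).hasFDerivWithinAt.congr
      (fun y hy => ?_) ?_ <;>
    simp only [G, indicator_of_mem (ball_subset_closedBall ‹_›), Pi.add_apply, id_eq,
      Pi.smul_apply]
  have hcv := integral_image_eq_integral_abs_det_fderiv_smul μ measurableSet_ball hderiv
    hbij.injective.injOn (fun _ => (1 : ℝ))
  rw [himage, setIntegral_const, smul_eq_mul, mul_one] at hcv
  rw [hcv]
  refine setIntegral_congr_fun measurableSet_ball fun x hx => ?_
  have hpos := det_id_add_pos (M := t • fderiv ℝ g x) <| by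
    rw [NNReal.smul_def, ← coe_nnnorm, nnnorm_smul, NNReal.nnnorm_eq]
    exact_mod_cast (mul_le_mul_right (hK x (ball_subset_closedBall hx)) t).trans_lt htK
  rw [smul_eq_mul, mul_one, abs_of_pos hpos]

/-- The integrand is polynomial in `t` along `id + t • g`, so it suffices to know the integral
for small `t`. -/
theorem integral_det_id_add_fderiv (hg : ContDiff ℝ 1 g) (h0 : ∀ x ∈ sphere 0 R, g x = 0) :
    ∫ x in ball 0 R, (ContinuousLinearMap.id ℝ E + fderiv ℝ g x).det ∂μ = μ.real (ball 0 R) := by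
  have hcont : Continuous (fderiv ℝ g) := hg.continuous_fderiv one_ne_zero
  obtain ⟨K, hK⟩ : ∃ K : ℝ≥0, ∀ x ∈ closedBall (0 : E) R, ‖fderiv ℝ g x‖₊ ≤ K := by
    obtain ⟨C, hC⟩ := (isCompact_closedBall (0 : E) R).exists_bound_of_continuousOn
      hcont.continuousOn
    exact ⟨C.toNNReal, fun x hx => NNReal.coe_le_coe.1 ((hC x hx).trans (Real.le_coe_toNNReal C))⟩
  let n := Module.finrank ℝ E
  let t : Fin (n + 1) → ℝ≥0 := fun i => i / ((n + 1) * (K + 1))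
  have htK : ∀ i, t i * K < 1 := by
    intro i
    have hi : (i : ℝ≥0) < n + 1 := mod_cast i.2
    rw [div_mul_eq_mul_div, div_lt_one (by positivity)]
    exact mul_lt_mul'' hi (lt_add_one K) zero_le zero_le
  have htinj : Function.Injective fun i => (t i : ℝ) := by
    intro i j hij
    have hn : ((n : ℝ≥0) + 1) * (K + 1) ≠ 0 := by positivity
    exact Fin.ext (Nat.cast_injective ((div_left_inj' hn).1 (NNReal.coe_injective hij)))
  obtain ⟨c, hcsum, hc⟩ := exists_weights_det_one_add ℝ E htinj
  have hint : ∀ i, IntegrableOn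
      (fun x => (ContinuousLinearMap.id ℝ E + t i • fderiv ℝ g x).det) (ball 0 R) μ := fun i =>
    ((ContinuousLinearMap.continuous_det.comp (by fun_prop)).continuousOn.integrableOn_compact
      (isCompact_closedBall 0 R)).mono_set ball_subset_closedBall
  calc ∫ x in ball 0 R, (ContinuousLinearMap.id ℝ E + fderiv ℝ g x).det ∂μ
      = ∫ x in ball 0 R, ∑ i, c i *
          (ContinuousLinearMap.id ℝ E + t i • fderiv ℝ g x).det ∂μ :=
        setIntegral_congr_fun measurableSet_ball fun x _ => hc (fderiv ℝ g x : E →ₗ[ℝ] E)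
    _ = ∑ i, c i * μ.real (ball 0 R) := by
        rw [integral_finsetSum _ fun i _ => (hint i).const_mul (c i)]
        exact Finset.sum_congr rfl fun i _ => by
          rw [integral_const_mul, integral_det_id_add_smul_fderiv μ
            (hg.differentiable one_ne_zero) hK h0 (htK i)]
    _ = μ.real (ball 0 R) := by rw [← Finset.sum_mul, hcsum, one_mul]

end NoRetraction

section NonvanishingExtension

open MeasureTheory Metric

section InnerProductSpace

variable {E : Type*} [NormedAddCommGroup E] [InnerProductSpace ℝ E] [FiniteDimensional ℝ E]
  {R : ℝ}

theorem det_eq_zero_of_hasFDerivAt_of_norm_eq (hR : R ≠ 0) {r : E → E} (hr : ∀ x, ‖r x‖ = R)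
    {D : E →L[ℝ] E} {x : E} (hD : HasFDerivAt r D x) : D.det = 0 := by
  by_contra hdet
  obtain ⟨v, hv : D v = r x⟩ := (LinearMap.equivOfDetNeZero (D : E →ₗ[ℝ] E) hdet).surjective (r x)
  have hconst : HasFDerivAt (fun y => ‖r y‖ ^ 2) (0 : E →L[ℝ] ℝ) x := by
    simp only [hr]
    exact hasFDerivAt_const _ _
  have happly := congrArg (fun L => L v) (hD.norm_sq.unique hconst)
  simp [hv, hr, hR] at happly

theorem exists_ne_self_of_contDiff_of_norm_eq (hR : 0 < R) {r : E → E} (hr : ContDiff ℝ 1 r)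
    (hnorm : ∀ x, ‖r x‖ = R) : ∃ x ∈ sphere (0 : E) R, r x ≠ x := by
  by_contra! hid
  borelize E
  set g : E → E := fun x => r x - x with hg
  have hgC : ContDiff ℝ 1 g := hr.sub contDiff_id
  have hdet : ∀ x, (ContinuousLinearMap.id ℝ E + fderiv ℝ g x).det = 0 := by
    refine fun x => det_eq_zero_of_hasFDerivAt_of_norm_eq hR.ne' hnorm (x := x) ?_
    simpa [hg, Function.comp_def, Pi.add_def] using
      (hasFDerivAt_id x).add (hgC.differentiable one_ne_zero x).hasFDerivAt
  have hvol := integral_det_id_add_fderiv volume hgC fun x hx => sub_eq_zero.2 (hid x hx)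
  simp only [hdet, integral_zero] at hvol
  have hpos : 0 < volume.real (ball (0 : E) R) :=
    ENNReal.toReal_pos (measure_ball_pos volume 0 hR).ne' measure_ball_lt_top.ne
  exact hpos.ne hvol

theorem exists_eq_zero_of_eq_self_outside_ball {f : E → E} (hf : Continuous f)
    (hid : ∀ x, R ≤ ‖x‖ → f x = x) : ∃ x, f x = 0 := by
  by_contra! hne
  wlog hR : 0 < R generalizing R
  · exact this (fun x _ => hid x ((not_lt.1 hR).trans (norm_nonneg x))) one_pos
  obtain ⟨g, hgC, hgf, hgsupp⟩ := (hf.sub continuous_id).exists_contDiff_approx 1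
    (ε := fun x => ‖f x‖) (by fun_prop) fun x => norm_pos_iff.2 (hne x)
  set h : E → E := fun x => x + g x with hh
  have hhC : ContDiff ℝ 1 h := contDiff_id.add hgC
  have hh0 : ∀ x, h x ≠ 0 := by
    intro x hx
    have hdist := hgf x
    rw [← neg_eq_of_add_eq_zero_right hx, Pi.sub_apply, id_eq, dist_eq_norm, neg_sub_left,
      sub_add_cancel, norm_neg] at hdist
    exact lt_irrefl _ hdist
  have hhid : ∀ x, R ≤ ‖x‖ → h x = x := by
    intro x hx
    have hgx : g x = 0 := Function.notMem_support.1 fun hsupp => hgsupp hsupp (by simp [hid x hx])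
    simp [hh, hgx]
  obtain ⟨x, hx, hne⟩ := exists_ne_self_of_contDiff_of_norm_eq hR
    (r := fun x => (R * ‖h x‖⁻¹) • h x)
    ((contDiff_const.mul ((hhC.norm ℝ hh0).inv fun x => norm_ne_zero_iff.2 (hh0 x))).smul hhC)
    fun x => by
      rw [norm_smul, norm_mul, norm_inv, norm_norm,
        inv_mul_cancel_right₀ (norm_ne_zero_iff.2 (hh0 x)), Real.norm_of_nonneg hR.le]
  have hxR : ‖x‖ = R := mem_sphere_zero_iff_norm.1 hx
  refine hne ?_
  rw [hhid x hxR.ge, hxR, mul_inv_cancel₀ hR.ne', one_smul]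

end InnerProductSpace

/-- The map `φ`, restricted to `L`, extends to a continuous nowhere zero map on `G`. Obstructions
to such extensions replace the degree theory of the usual proofs of invariance of domain. -/
def ExtendsNonvanishing {X E : Type*} [TopologicalSpace X] [TopologicalSpace E] [Zero E]
    (G L : Set X) (φ : X → E) : Prop :=
  ∃ F : X → E, ContinuousOn F G ∧ (∀ x ∈ G, F x ≠ 0) ∧ EqOn F φ L

section Homotopy

universe u v

variable {X : Type u} {E : Type v} [TopologicalSpace X] [TopologicalSpace E] {G L : Set X}

theorem exists_continuousMap_homotopy_extension [NormalSpace (ℝ × X)] [TietzeExtension.{u, v} E]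
    (hG : IsClosed G) (hL : IsClosed L) {h : ℝ × X → E} (hc : ContinuousOn h (Icc 0 1 ×ˢ L))
    {F : X → E} (hF : ContinuousOn F G) (hFh : ∀ x ∈ L, F x = h (0, x)) :
    ∃ H : C(ℝ × X, E), EqOn H h (Icc 0 1 ×ˢ L) ∧ ∀ x ∈ G, H (0, x) = F x := by
  classical
  set D : Set (ℝ × X) := ({0} ×ˢ G) ∪ (Icc 0 1 ×ˢ L)
  have hG' : IsClosed ({0} ×ˢ G : Set (ℝ × X)) := isClosed_singleton.prod hG
  have hL' : IsClosed (Icc 0 1 ×ˢ L : Set (ℝ × X)) := isClosed_Icc.prod hL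
  set H₀ : ℝ × X → E := (Icc 0 1 ×ˢ L).piecewise h (F ∘ Prod.snd)
  have hH₀L : EqOn H₀ h (Icc 0 1 ×ˢ L) := piecewise_eqOn _ _ _
  have hH₀G : EqOn H₀ (F ∘ Prod.snd) ({0} ×ˢ G) := by
    rintro ⟨t, x⟩ ⟨rfl : t = 0, -⟩
    by_cases hxL : x ∈ L
    · rw [hH₀L ⟨left_mem_Icc.2 zero_le_one, hxL⟩]
      exact (hFh x hxL).symm
    · exact piecewise_eq_of_notMem _ _ _ fun hx => hxL hx.2
  have hH₀c : ContinuousOn H₀ D :=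
    ((hF.comp continuousOn_snd fun p hp => hp.2).congr hH₀G).union_of_isClosed (hc.congr hH₀L)
      hG' hL'
  obtain ⟨H, hH⟩ := ContinuousMap.exists_restrict_eq (hG'.union hL')
    (⟨D.domRestrict H₀, hH₀c.domRestrict⟩ : C(D, E))
  have hHD : EqOn H H₀ D := fun p hp => congrArg (fun f : C(D, E) => f ⟨p, hp⟩) hH
  exact ⟨H, fun p hp => (hHD (Or.inr hp)).trans (hH₀L hp),
    fun x hx => (hHD (Or.inl ⟨mem_singleton 0, hx⟩)).trans (hH₀G ⟨mem_singleton 0, hx⟩)⟩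

end Homotopy

variable {X E : Type*} [MetricSpace X] [NormedAddCommGroup E] [NormedSpace ℝ E]
  [FiniteDimensional ℝ E] {G L : Set X}

/-- The time at which the extended homotopy is followed is cut down, by a Urysohn function, to `0`
over the points of `G` where the homotopy vanishes at some time. -/
theorem ExtendsNonvanishing.of_homotopy (hG : IsCompact G) (hL : IsClosed L)
    {h : ℝ × X → E} (hc : ContinuousOn h (Icc 0 1 ×ˢ L)) (h0 : ∀ p ∈ Icc (0 : ℝ) 1 ×ˢ L, h p ≠ 0)
    (hext : ExtendsNonvanishing G L fun x => h (0, x)) :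
    ExtendsNonvanishing G L fun x => h (1, x) := by
  obtain ⟨F, hF, hF0, hFh⟩ := hext
  have := TietzeExtension.of_tvs ℝ (E := E)
  obtain ⟨H, hHL, hHG⟩ := exists_continuousMap_homotopy_extension hG.isClosed hL hc hF hFh
  set Z : Set X := Prod.snd '' ((Icc (0 : ℝ) 1 ×ˢ G) ∩ H ⁻¹' {0})
  have hZ : IsClosed Z :=
    (((isCompact_Icc.prod hG).inter_right (isClosed_singleton.preimage H.continuous)).image
      continuous_snd).isClosed
  have hdisj : Disjoint Z L := by
    rw [Set.disjoint_left]
    rintro _ ⟨⟨t, x⟩, ⟨ht, hHx⟩, rfl⟩ hxL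
    exact h0 (t, x) ⟨ht.1, hxL⟩ (hHL (x := (t, x)) ⟨ht.1, hxL⟩ ▸ hHx)
  obtain ⟨u, hu0, hu1, hu⟩ := exists_continuous_zero_one_of_isClosed hZ hL hdisj
  refine ⟨fun x => H (u x, x), by fun_prop, fun x hx hHx => ?_, fun x hx => ?_⟩
  · have hux : u x = 0 := hu0 ⟨(u x, x), ⟨⟨hu x, hx⟩, hHx⟩, rfl⟩
    simp only [hux, hHG x hx] at hHx
    exact hF0 x hx hHx
  · simp only [hu1 hx, Pi.one_apply]
    exact hHL ⟨right_mem_Icc.2 zero_le_one, hx⟩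

end NonvanishingExtension

section Ball

open Metric

variable {E : Type*} [NormedAddCommGroup E] [InnerProductSpace ℝ E] [FiniteDimensional ℝ E]
  {q : E} {R : ℝ}

theorem not_extendsNonvanishing_sub {a : E} (ha : a ∈ ball q R) :
    ¬ ExtendsNonvanishing (closedBall q R) (sphere q R) fun x => x - a := by
  rintro ⟨F, hF, hF0, hFL⟩
  set f : E → E := fun x => if dist x q ≤ R then F x else x - a with hf
  have hfc : Continuous f :=
    continuous_if_le (by fun_prop) continuous_const hF (by fun_prop) fun x hx => hFL hx
  obtain ⟨x, hx⟩ := exists_eq_zero_of_eq_self_outside_ball (R := 2 * R)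
    (f := fun y => f (y + a)) (by fun_prop) fun y hy => by
      have hdist : ¬ dist (y + a) q ≤ R := fun hle => by
        have htri := dist_triangle_right (y + a) a q
        rw [dist_eq_norm, add_sub_cancel_right] at htri
        linarith [mem_ball.1 ha]
      simp only [hf, if_neg hdist, add_sub_cancel_right]
  simp only [hf] at hx
  split_ifs at hx with hle
  · exact hF0 _ hle hx
  · exact hle (by simpa [sub_eq_zero.1 hx] using (mem_ball.1 ha).le)

theorem exists_eq_zero_of_norm_sub_lt (hR : 0 < R) {f : E → E}
    (hf : ContinuousOn f (closedBall q R)) (hlt : ∀ x ∈ sphere q R, ‖f x - (x - q)‖ < R) :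
    ∃ x ∈ closedBall q R, f x = 0 := by
  by_contra! hne
  set h : ℝ × E → E := fun p => f p.2 + p.1 • (p.2 - q - f p.2) with hh
  have hc : ContinuousOn h (Icc 0 1 ×ˢ sphere q R) := by
    have hf' : ContinuousOn (fun p : ℝ × E => f p.2) (Icc 0 1 ×ˢ sphere q R) :=
      (hf.mono sphere_subset_closedBall).comp continuousOn_snd fun p hp => hp.2
    exact hf'.add (continuousOn_fst.smul ((continuousOn_snd.sub continuousOn_const).sub hf'))
  have h0 : ∀ p ∈ Icc (0 : ℝ) 1 ×ˢ sphere q R, h p ≠ 0 := by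
    rintro ⟨t, x⟩ ⟨ht, hx⟩ htx
    have hq : x - q = (t - 1) • (f x - (x - q)) := by
      rw [← sub_eq_zero, ← htx]
      module
    have hnorm := congrArg norm hq
    rw [← dist_eq_norm, mem_sphere.1 hx, norm_smul, norm_sub_rev,
      Real.norm_of_nonneg (sub_nonneg.2 ht.2)] at hnorm
    nlinarith [hlt x hx, ht.1, norm_nonneg (f x - (x - q))]
  have hhom := ExtendsNonvanishing.of_homotopy (isCompact_closedBall q R) isClosed_sphere hc h0
    (by simpa [hh] using! ⟨f, hf, hne, eqOn_refl f _⟩)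
  exact not_extendsNonvanishing_sub (mem_ball_self hR) (by simpa [hh] using hhom)

/-- An injective map of the ball has a continuous left inverse, which is approximated by a smooth
map; the range of the latter has dense complement. -/
theorem not_injOn_closedBall_of_finrank_lt {F : Type*} [NormedAddCommGroup F] [NormedSpace ℝ F]
    [FiniteDimensional ℝ F] (hFE : Module.finrank ℝ F < Module.finrank ℝ E) (hR : 0 < R)
    {f : E → F} (hf : ContinuousOn f (closedBall q R)) : ¬ InjOn f (closedBall q R) := by
  intro hinj
  have : CompactSpace (closedBall q R) := isCompact_iff_compactSpace.1 (isCompact_closedBall q R)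
  have := TietzeExtension.of_tvs ℝ (E := E)
  have hemb : Topology.IsClosedEmbedding fun x : closedBall q R => f x :=
    hf.domRestrict.isClosedEmbedding (injOn_iff_injective.1 hinj)
  obtain ⟨G, hG⟩ := ContinuousMap.exists_extension hemb
    (⟨fun x => x - q, by fun_prop⟩ : C(closedBall q R, E))
  have hGf : ∀ x ∈ closedBall q R, G (f x) = x - q := fun x hx =>
    congrArg (fun h : C(closedBall q R, E) => h ⟨x, hx⟩) hG
  obtain ⟨g, hgC, hgG, -⟩ := G.continuous.exists_contDiff_approx 1 (ε := fun _ => R / 2)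
    continuous_const fun _ => half_pos hR
  obtain ⟨c, hc, hcR⟩ :=
    (hgC.dense_compl_range_of_finrank_lt_finrank hFE).exists_dist_lt 0 (half_pos hR)
  obtain ⟨x, -, hx⟩ := exists_eq_zero_of_norm_sub_lt hR (f := fun x => g (f x) - c)
    ((hgC.continuous.comp_continuousOn hf).sub continuousOn_const) fun x hx => by
      have hgx := hgG (f x)
      rw [hGf x (sphere_subset_closedBall hx), dist_eq_norm] at hgx
      rw [dist_zero_left] at hcR
      calc ‖g (f x) - c - (x - q)‖ = ‖g (f x) - (x - q) - c‖ := by rw [sub_right_comm]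
        _ ≤ ‖g (f x) - (x - q)‖ + ‖c‖ := norm_sub_le _ _
        _ < R := by linarith
  exact hc ⟨f x, sub_eq_zero.1 hx⟩

end Ball

/-! ### Closures of the two sides of a separating submanifold -/

section RadialPush

variable {F : Type*} [NormedAddCommGroup F] [NormedSpace ℝ F] {s t : ℝ} {v : F}

/-- The linear homotopy from the identity (at time `0`) to the map (at time `1`) pushing every
nonzero vector of norm at most `s` radially onto the sphere of radius `s` and fixing all vectors of
norm at least `s`. -/
def radialPush (s t : ℝ) (v : F) : F := (1 + t * (max s ‖v‖ / ‖v‖ - 1)) • v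

@[simp]
theorem radialPush_zero_left (s : ℝ) (v : F) : radialPush s 0 v = v := by simp [radialPush]

theorem radialPush_of_le_norm (h : s ≤ ‖v‖) : radialPush s t v = v := by
  rcases eq_or_ne v 0 with rfl | hv
  · simp [radialPush]
  · simp [radialPush, max_eq_right h, hv]

theorem norm_radialPush (ht : 0 ≤ t) (hv : v ≠ 0) :
    ‖radialPush s t v‖ = ‖v‖ + t * (max s ‖v‖ - ‖v‖) := by
  have hv' : 0 < ‖v‖ := norm_pos_iff.2 hv
  have h1 : 1 ≤ max s ‖v‖ / ‖v‖ := (one_le_div hv').2 (le_max_right _ _)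
  rw [radialPush, norm_smul, Real.norm_of_nonneg (by nlinarith)]
  field_simp

theorem radialPush_ne_zero (ht : 0 ≤ t) (hv : v ≠ 0) : radialPush s t v ≠ 0 := by
  rw [← norm_pos_iff, norm_radialPush ht hv]
  nlinarith [norm_pos_iff.2 hv, le_max_right s ‖v‖]

theorem norm_radialPush_le (ht : t ∈ Icc 0 1) (hv : v ≠ 0) (h : ‖v‖ ≤ s) :
    ‖radialPush s t v‖ ≤ s := by
  rw [norm_radialPush ht.1 hv, max_eq_left h]
  nlinarith [ht.1, ht.2]

theorem le_norm_radialPush_one (hv : v ≠ 0) : s ≤ ‖radialPush s 1 v‖ := by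
  simp [norm_radialPush zero_le_one hv]

theorem continuousOn_radialPush (s : ℝ) :
    ContinuousOn (fun p : ℝ × F => radialPush s p.1 p.2) {p | p.2 ≠ 0} := by
  unfold radialPush
  refine ContinuousOn.smul (continuousOn_const.add (continuousOn_fst.mul
    ((ContinuousOn.div (by fun_prop) (by fun_prop) fun p hp => ?_).sub continuousOn_const)))
    continuousOn_snd
  exact norm_ne_zero_iff.2 hp

end RadialPush

section ChartPush

open Metric

variable {E F : Type*} [NormedAddCommGroup F] [NormedSpace ℝ F] {e : PartialEquiv E F} {r x : E}
  {s t : ℝ}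

/-- The homotopy moving points away from `r` by the radial push in the coordinates `e`. -/
def chartPush (e : PartialEquiv E F) (r : E) (s : ℝ) (p : ℝ × E) : E :=
  e.symm (e r + radialPush s p.1 (e p.2 - e r))

theorem chartPush_of_le_dist (hx : x ∈ e.source) (h : s ≤ dist (e x) (e r)) :
    chartPush e r s (t, x) = x := by
  rw [dist_eq_norm] at h
  simp [chartPush, radialPush_of_le_norm h, e.left_inv hx]

theorem chartPush_zero (hx : x ∈ e.source) : chartPush e r s (0, x) = x := by
  simp [chartPush, e.left_inv hx]

theorem add_radialPush_mem_target (hs : closedBall (e r) s ⊆ e.target) (ht : t ∈ Icc (0 : ℝ) 1)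
    (hx : x ∈ e.source) (hxr : e x ≠ e r) : e r + radialPush s t (e x - e r) ∈ e.target := by
  rcases le_total ‖e x - e r‖ s with h | h
  · refine hs ?_
    simpa [dist_eq_norm] using norm_radialPush_le ht (sub_ne_zero.2 hxr) h
  · rw [radialPush_of_le_norm h, add_sub_cancel]
    exact e.map_source hx

theorem chartPush_mem_source (hs : closedBall (e r) s ⊆ e.target) (ht : t ∈ Icc (0 : ℝ) 1)
    (hx : x ∈ e.source) (hxr : e x ≠ e r) : chartPush e r s (t, x) ∈ e.source :=
  e.map_target (add_radialPush_mem_target hs ht hx hxr)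

theorem apply_chartPush (hs : closedBall (e r) s ⊆ e.target) (ht : t ∈ Icc (0 : ℝ) 1)
    (hx : x ∈ e.source) (hxr : e x ≠ e r) :
    e (chartPush e r s (t, x)) = e r + radialPush s t (e x - e r) :=
  e.right_inv (add_radialPush_mem_target hs ht hx hxr)

theorem chartPush_ne (hs : closedBall (e r) s ⊆ e.target) (ht : t ∈ Icc (0 : ℝ) 1)
    (hx : x ∈ e.source) (hxr : e x ≠ e r) : chartPush e r s (t, x) ≠ r := fun h =>
  radialPush_ne_zero (s := s) ht.1 (sub_ne_zero.2 hxr)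
    (by simpa [h] using (apply_chartPush hs ht hx hxr).symm)

theorem le_dist_apply_chartPush_one (hs : closedBall (e r) s ⊆ e.target) (hx : x ∈ e.source)
    (hxr : e x ≠ e r) : s ≤ dist (e (chartPush e r s (1, x))) (e r) := by
  rw [apply_chartPush hs ⟨zero_le_one, le_rfl⟩ hx hxr, dist_eq_norm, add_sub_cancel_left]
  exact le_norm_radialPush_one (sub_ne_zero.2 hxr)

theorem continuousOn_chartPush [TopologicalSpace E] (he : ContinuousOn e e.source)
    (he' : ContinuousOn e.symm e.target) (hs : closedBall (e r) s ⊆ e.target) {K : Set E}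
    (hK : K ⊆ e.source) (hKr : ∀ x ∈ K, e x ≠ e r) :
    ContinuousOn (chartPush e r s) (Icc 0 1 ×ˢ K) := by
  have hη : ContinuousOn (fun p : ℝ × E => (p.1, e p.2 - e r)) (Icc 0 1 ×ˢ K) :=
    continuousOn_fst.prodMk (((he.mono hK).comp continuousOn_snd fun p hp => hp.2).sub
      continuousOn_const)
  have hpush : ContinuousOn (fun p : ℝ × E => radialPush s p.1 (e p.2 - e r)) (Icc 0 1 ×ˢ K) :=
    (continuousOn_radialPush s).comp hη fun p hp => sub_ne_zero.2 (hKr _ hp.2)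
  exact he'.comp (continuousOn_const.add hpush) fun p hp =>
    add_radialPush_mem_target hs hp.1 (hK hp.2) (hKr _ hp.2)

theorem exists_continuousOn_eq_chartPush_union [TopologicalSpace E] (he : ContinuousOn e e.source)
    (he' : ContinuousOn e.symm e.target) (hs : closedBall (e r) s ⊆ e.target) {K S : Set E}
    (hK : K ⊆ e.source) (hKr : ∀ x ∈ K, e x ≠ e r) (hKc : IsClosed K) (hSc : IsClosed S)
    (hKS : ∀ x ∈ K ∩ S, s ≤ dist (e x) (e r)) :
    ∃ g : ℝ × E → E, ContinuousOn g (Icc 0 1 ×ˢ (K ∪ S)) ∧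
      (∀ p : ℝ × E, p.2 ∈ K → g p = chartPush e r s p) ∧ ∀ p : ℝ × E, p.2 ∈ S → g p = p.2 := by
  classical
  set g : ℝ × E → E := fun p => if p.2 ∈ K then chartPush e r s p else p.2
  have hgK : ∀ p : ℝ × E, p.2 ∈ K → g p = chartPush e r s p := fun p hp => if_pos hp
  have hgS : ∀ p : ℝ × E, p.2 ∈ S → g p = p.2 := by
    rintro ⟨t, x⟩ hx
    by_cases hxK : x ∈ K
    · exact (hgK _ hxK).trans (chartPush_of_le_dist (hK hxK) (hKS x ⟨hxK, hx⟩))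
    · exact if_neg hxK
  refine ⟨g, ?_, hgK, hgS⟩
  rw [prod_union]
  exact ((continuousOn_chartPush he he' hs hK hKr).congr fun p hp => hgK p hp.2).union_of_isClosed
    (continuousOn_snd.congr fun p hp => hgS p hp.2) (isClosed_Icc.prod hKc) (isClosed_Icc.prod hSc)

end ChartPush

theorem ExtendsNonvanishing.congr {X E : Type*} [TopologicalSpace X] [TopologicalSpace E] [Zero E]
    {G L : Set X} {φ ψ : X → E} (h : ExtendsNonvanishing G L φ) (hφψ : EqOn φ ψ L) :
    ExtendsNonvanishing G L ψ :=
  h.imp fun _ hF => ⟨hF.1, hF.2.1, hF.2.2.trans hφψ⟩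

section LocalClosure

open Metric

variable {E F : Type*} [NormedAddCommGroup E] [InnerProductSpace ℝ E] [FiniteDimensional ℝ E]
  [NormedAddCommGroup F] [NormedSpace ℝ F] {U L V : Set E} {a q r : E} {R s : ℝ}
  {e : PartialEquiv E F}

theorem not_extendsNonvanishing_sub_of_isOpen (hU : IsOpen U) (haU : a ∈ U) (haR : a ∈ ball q R)
    (hfr : (closure U \ U) ∩ closedBall q R ⊆ L) (hsph : sphere q R ∩ closure U ⊆ L) :
    ¬ ExtendsNonvanishing (closure U ∩ closedBall q R) L fun x => x - a := by
  classical
  rintro ⟨f, hf, hf0, hfL⟩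
  set G := closure U ∩ closedBall q R
  have hG : IsClosed G := isClosed_closure.inter isClosed_closedBall
  have hcover : closedBall q R ⊆ G ∪ closedBall q R \ U := fun x hx =>
    (em (x ∈ U)).imp (fun hxU => ⟨subset_closure hxU, hx⟩) fun hxU => ⟨hx, hxU⟩
  have hfU : EqOn (G.piecewise f fun x => x - a) (fun x => x - a) (closedBall q R \ U) := by
    intro x hx
    by_cases hxG : x ∈ G
    · rw [piecewise_eq_of_mem _ _ _ hxG, hfL (hfr ⟨⟨hxG.1, hx.2⟩, hx.1⟩)]
    · exact piecewise_eq_of_notMem _ _ _ hxG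
  refine not_extendsNonvanishing_sub haR ⟨G.piecewise f fun x => x - a, ?_, fun x hx => ?_,
    fun x hx => ?_⟩
  · exact ((hf.congr (piecewise_eqOn _ _ _)).union_of_isClosed
      (ContinuousOn.congr (by fun_prop) hfU) hG (isClosed_closedBall.sdiff hU)).mono hcover
  · by_cases hxG : x ∈ G
    · rw [piecewise_eq_of_mem _ _ _ hxG]
      exact hf0 x hxG
    · rw [piecewise_eq_of_notMem _ _ _ hxG, sub_ne_zero]
      rintro rfl
      exact hxG ⟨subset_closure haU, hx⟩
  · by_cases hxG : x ∈ G
    · rw [piecewise_eq_of_mem _ _ _ hxG, hfL (hsph ⟨hx, hxG.1⟩)]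
    · exact piecewise_eq_of_notMem _ _ _ hxG

/-- Otherwise `x - r`, which extends to `closure U`, would be homotopic to `x - a` on `L`: push `L`
off `V`, move `r` to `a` within `V`, and undo the push. -/
theorem exists_homotopy_one_mem (hU : IsOpen U) (haU : a ∈ U) (haR : a ∈ ball q R)
    (hr : r ∉ closure U) (hV : Convex ℝ V) (haV : a ∈ V) (hrV : r ∈ V) (hL : IsClosed L)
    (hfr : (closure U \ U) ∩ closedBall q R ⊆ L) (hsph : sphere q R ∩ closure U ⊆ L)
    {g : ℝ × E → E} (hg : ContinuousOn g (Icc 0 1 ×ˢ L)) (hg0 : ∀ x ∈ L, g (0, x) = x)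
    (hga : ∀ p ∈ Icc 0 1 ×ˢ L, g p ≠ a) (hgr : ∀ p ∈ Icc 0 1 ×ˢ L, g p ≠ r) :
    ∃ x ∈ L, g (1, x) ∈ V := by
  by_contra! hgV
  have hG : IsCompact (closure U ∩ closedBall q R) :=
    (isCompact_closedBall q R).inter_left isClosed_closure
  have hext : ExtendsNonvanishing (closure U ∩ closedBall q R) L fun x => g (0, x) - r :=
    ⟨fun x => x - r, by fun_prop, fun x hx => sub_ne_zero.2 fun h => hr (h ▸ hx.1),
      fun x hx => by simp only [hg0 x hx]⟩
  have hpush : ExtendsNonvanishing (closure U ∩ closedBall q R) L fun x => g (1, x) - r :=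
    .of_homotopy hG hL (h := fun p => g p - r) (hg.sub continuousOn_const)
      (fun p hp => sub_ne_zero.2 (hgr p hp)) hext
  have hmove : ExtendsNonvanishing (closure U ∩ closedBall q R) L fun x => g (1, x) - a := by
    have h1 : ContinuousOn (fun p : ℝ × E => g (1, p.2)) (Icc 0 1 ×ˢ L) :=
      hg.comp (f := fun p : ℝ × E => ((1 : ℝ), p.2)) (by fun_prop) fun p hp => ⟨by simp, hp.2⟩
    refine (ExtendsNonvanishing.of_homotopy hG hL
      (h := fun p => g (1, p.2) - AffineMap.lineMap r a p.1)
      (h1.sub (Continuous.continuousOn (by fun_prop))) (fun p hp => sub_ne_zero.2 fun h => ?_)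
      (hpush.congr fun x _ => by simp)).congr fun x _ => by simp
    exact hgV p.2 hp.2 (h ▸ hV.lineMap_mem hrV haV hp.1)
  have hrev : MapsTo (fun p : ℝ × E => (1 - p.1, p.2)) (Icc 0 1 ×ˢ L) (Icc 0 1 ×ˢ L) :=
    fun p hp => ⟨⟨sub_nonneg.2 hp.1.2, sub_le_self _ hp.1.1⟩, hp.2⟩
  have hpull : ExtendsNonvanishing (closure U ∩ closedBall q R) L fun x => g (1 - 1, x) - a :=
    .of_homotopy hG hL (h := fun p => g (1 - p.1, p.2) - a)
      ((hg.comp (by fun_prop) hrev).sub continuousOn_const)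
      (fun p hp => sub_ne_zero.2 (hga _ (hrev hp))) (hmove.congr fun x _ => by simp)
  exact not_extendsNonvanishing_sub_of_isOpen hU haU haR hfr hsph
    (hpull.congr fun x hx => by simp [hg0 x hx])

theorem mem_closure_of_chart (hU : IsOpen U) (he : ContinuousOn e e.source)
    (he' : ContinuousOn e.symm e.target) (hdisj : Disjoint U e.source)
    (hfr : (closure U \ U) ∩ closedBall q R ⊆ e.source) (hV : Convex ℝ V) (hVR : V ⊆ ball q R)
    (hVs : ∀ x ∈ e.source ∩ V, dist (e x) (e r) < s) (hs : closedBall (e r) s ⊆ e.target)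
    (hsR : ∀ z ∈ closedBall (e r) s, e.symm z ∈ ball q R) (haU : a ∈ U) (haV : a ∈ V)
    (hr : r ∈ e.source) (hrV : r ∈ V) : r ∈ closure U := by
  by_contra hrU
  set K := (closure U \ U) ∩ closedBall q R
  set S := sphere q R ∩ closure U
  have hK : IsClosed K := (isClosed_closure.sdiff hU).inter isClosed_closedBall
  have hS : IsClosed S := isClosed_sphere.inter isClosed_closure
  have hKr : ∀ x ∈ K, e x ≠ e r := fun x hx h => hrU (e.injOn (hfr hx) hr h ▸ hx.1.1)
  have hKS : ∀ x ∈ K ∩ S, s ≤ dist (e x) (e r) := fun x hx => le_of_not_gt fun hlt =>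
    (mem_ball.1 (e.left_inv (hfr hx.1) ▸ hsR (e x) (mem_closedBall.2 hlt.le))).ne hx.2.1
  obtain ⟨g, hg, hgK, hgS⟩ := exists_continuousOn_eq_chartPush_union he he' hs hfr hKr hK hS hKS
  have hVS : ∀ x ∈ S, x ∉ V := fun x hx hxV => (mem_ball.1 (hVR hxV)).ne hx.1
  obtain ⟨x, hxK | hxS, hxV⟩ := exists_homotopy_one_mem hU haU (hVR haV) hrU hV haV hrV
    (hK.union hS) subset_union_left subset_union_right hg
    (fun x hx => hx.elim (fun hxK => (hgK _ hxK).trans (chartPush_zero (hfr hxK))) (hgS (0, x)))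
    (fun p hp h => hp.2.elim
      (fun hxK => disjoint_left.1 hdisj haU
        (h ▸ hgK p hxK ▸ chartPush_mem_source hs hp.1 (hfr hxK) (hKr _ hxK)))
      fun hxS => hVS _ hxS (hgS p hxS ▸ h ▸ haV))
    (fun p hp h => hp.2.elim
      (fun hxK => chartPush_ne hs hp.1 (hfr hxK) (hKr _ hxK) (hgK p hxK ▸ h))
      fun hxS => hVS _ hxS (hgS p hxS ▸ h ▸ hrV))
  · rw [hgK _ hxK] at hxV
    exact (hVs _ ⟨chartPush_mem_source hs ⟨zero_le_one, le_rfl⟩ (hfr hxK) (hKr x hxK), hxV⟩).not_ge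
      (le_dist_apply_chartPush_one hs (hfr hxK) (hKr x hxK))
  · rw [hgS _ hxS] at hxV
    exact hVS x hxS hxV

/-- If an open set `U` is, near the points of the topological submanifold `e.source`, bounded by
this submanifold, then the set of points of the submanifold adherent to `U` is open in it. -/
theorem eventually_mem_closure_of_chart {O : Set E} (hO : IsOpen O) (hU : IsOpen U)
    (he : ContinuousOn e e.source) (he' : ContinuousOn e.symm e.target) (het : IsOpen e.target)
    (heO : e.source ⊆ O) (hdisj : Disjoint U e.source) (hcl : closure U ∩ O ⊆ U ∪ e.source)
    (hq : q ∈ e.source) (hqU : q ∈ closure U) : ∀ᶠ r in nhdsWithin q e.source, r ∈ closure U := by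
  obtain ⟨R, hR, hRO⟩ := nhds_basis_closedBall.mem_iff.1 (hO.mem_nhds (heO hq))
  have hfr : (closure U \ U) ∩ closedBall q R ⊆ e.source := fun x hx =>
    (hcl ⟨hx.1.1, hRO hx.2⟩).resolve_left hx.1.2
  have hsymm : e.symm ⁻¹' ball q R ∈ nhds (e q) :=
    (he'.continuousAt (het.mem_nhds (e.map_source hq))).preimage_mem_nhds
      (by simpa [e.left_inv hq] using ball_mem_nhds q hR)
  obtain ⟨ρ, hρ, hρe⟩ := Metric.mem_nhds_iff.1
    (Filter.inter_mem (het.mem_nhds (e.map_source hq)) hsymm)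
  obtain ⟨R', hR', hR'e⟩ := Metric.continuousWithinAt_iff.1 (he q hq) (ρ / 4) (by positivity)
  set V := ball q (min R' R)
  have hVe : ∀ x ∈ e.source ∩ V, dist (e x) (e q) < ρ / 4 := fun x hx =>
    hR'e hx.1 (hx.2.trans_le (min_le_left _ _))
  have hqV : V ∈ nhds q := ball_mem_nhds q (lt_min hR' hR)
  obtain ⟨a, haV, haU⟩ := mem_closure_iff_nhds.1 hqU V hqV
  filter_upwards [self_mem_nhdsWithin, mem_nhdsWithin_of_mem_nhds hqV] with r hr hrV
  have hball : closedBall (e r) (ρ / 2) ⊆ ball (e q) ρ :=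
    closedBall_subset_ball' (by linarith [hVe r ⟨hr, hrV⟩])
  exact mem_closure_of_chart hU he he' hdisj hfr (convex_ball _ _)
    (ball_subset_ball (min_le_right _ _))
    (fun x hx => (dist_triangle_right _ _ (e q)).trans_lt
      (by linarith [hVe x hx, hVe r ⟨hr, hrV⟩]))
    (fun z hz => (hρe (hball hz)).1) (fun z hz => (hρe (hball hz)).2) haU haV hr hrV

end LocalClosure

section Topology

variable {E F G : Type*} [TopologicalSpace E]

open Filter Topology

theorem subset_of_isPreconnected_of_mem_nhdsWithin {S W : Set E} (hS : IsPreconnected S)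
    (hne : (S ∩ W).Nonempty) (hW : ∀ x ∈ S ∩ W, W ∈ 𝓝[S] x) (hcl : S ∩ closure (S ∩ W) ⊆ W) :
    S ⊆ W := by
  have := isPreconnected_iff_preconnectedSpace.1 hS
  have hclopen : IsClopen (Subtype.val ⁻¹' W : Set S) := by
    refine ⟨isClosed_of_closure_subset fun x hx => hcl ⟨x.2, ?_⟩, isOpen_iff_mem_nhds.2 fun x hx =>
      preimage_coe_mem_nhds_subtype.2 (hW x ⟨x.2, hx⟩)⟩
    rwa [closure_subtype, Subtype.image_preimage_coe] at hx
  obtain ⟨x, hxS, hxW⟩ := hne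
  exact fun y hy => (hclopen.eq_univ ⟨⟨x, hxS⟩, hxW⟩).ge (mem_univ (⟨y, hy⟩ : S))

/-- A local chart of the subset `S` of a topological space, on a relatively open part of `S`, as a
partial equivalence on the ambient space. -/
structure IsLocalChart [TopologicalSpace F] (S : Set E) (e : PartialEquiv E F) : Prop where
  exists_source_eq : ∃ V, IsOpen V ∧ e.source = S ∩ V
  isOpen_target : IsOpen e.target
  continuousOn : ContinuousOn e e.source
  continuousOn_symm : ContinuousOn e.symm e.target

variable [TopologicalSpace F] [TopologicalSpace G] {S X M : Set E} {p q : E}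

theorem exists_isLocalChart [ChartedSpace F S] (hp : p ∈ S) :
    ∃ e : PartialEquiv E F, IsLocalChart S e ∧ p ∈ e.source := by
  have : Nonempty S := ⟨⟨p, hp⟩⟩
  set c := chartAt F (⟨p, hp⟩ : S)
  set ι : PartialEquiv S E := Subtype.val_injective.injOn.toPartialEquiv Subtype.val univ
  have hι : ∀ x : S, ι.symm x = x := fun x => ι.left_inv (mem_univ x)
  obtain ⟨V, hV, hVc⟩ := isOpen_induced_iff.1 c.open_source
  have hιc : ContinuousOn ι.symm S := Topology.IsInducing.subtypeVal.continuousOn_iff.2 <|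
    continuousOn_id.congr fun x hx => congrArg Subtype.val (hι ⟨x, hx⟩)
  have hsource : (ι.symm.trans c.toPartialEquiv).source = S ∩ V := by
    ext x
    refine ⟨?_, fun hx => ?_⟩
    · rintro ⟨⟨x, -, rfl⟩, hx⟩
      exact ⟨x.2, hVc.ge ((hι x) ▸ hx)⟩
    · exact ⟨⟨⟨x, hx.1⟩, mem_univ _, rfl⟩, mem_preimage.2 ((hι ⟨x, hx.1⟩).symm ▸ hVc.le hx.2)⟩
  have htarget : (ι.symm.trans c.toPartialEquiv).target = c.target := inter_univ _
  refine ⟨ι.symm.trans c.toPartialEquiv, ⟨⟨V, hV, hsource⟩, ?_, ?_, ?_⟩, ?_⟩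
  · exact htarget ▸ c.open_target
  · exact c.continuousOn.comp (hιc.mono (hsource ▸ inter_subset_left)) fun x hx => hx.2
  · rw [htarget]
    exact continuous_subtype_val.comp_continuousOn c.continuousOn_symm
  · exact hsource ▸ ⟨hp, hVc.ge (mem_chart_source F _)⟩

theorem IsLocalChart.restr {e : PartialEquiv E F} (he : IsLocalChart S e) {V : Set E}
    (hV : IsOpen V) : IsLocalChart S (e.restr V) := by
  obtain ⟨V', hV', hs⟩ := he.exists_source_eq
  refine ⟨⟨V' ∩ V, hV'.inter hV, ?_⟩, ?_, ?_, ?_⟩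
  · rw [PartialEquiv.restr_source, hs, inter_assoc]
  · exact he.continuousOn_symm.isOpen_inter_preimage he.isOpen_target hV
  · exact he.continuousOn.mono inter_subset_left
  · exact he.continuousOn_symm.mono inter_subset_left

theorem IsLocalChart.mem_nhdsWithin {e : PartialEquiv E F} (he : IsLocalChart S e)
    (hp : p ∈ e.source) : e.source ∈ 𝓝[S] p := by
  obtain ⟨V, hV, hs⟩ := he.exists_source_eq
  rw [hs] at hp ⊢
  exact inter_mem_nhdsWithin S (hV.mem_nhds hp.2)

theorem IsLocalChart.continuousWithinAt {e : PartialEquiv E F} (he : IsLocalChart S e)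
    (hp : p ∈ e.source) : ContinuousWithinAt e S p :=
  (he.continuousOn p hp).mono_of_mem_nhdsWithin (he.mem_nhdsWithin hp)

theorem exists_isLocalChart_pair [ChartedSpace F X] [ChartedSpace G M] (hMX : M ⊆ X) (hq : q ∈ M) :
    ∃ (e : PartialEquiv E F) (f : PartialEquiv E G), IsLocalChart X e ∧ IsLocalChart M f ∧
      q ∈ e.source ∧ f.source = M ∩ e.source := by
  obtain ⟨e, he, hqe⟩ := exists_isLocalChart (F := F) (hMX hq)
  obtain ⟨f, hf, hqf⟩ := exists_isLocalChart (F := G) hq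
  obtain ⟨V, hV, hVe⟩ := he.exists_source_eq
  obtain ⟨W, hW, hWf⟩ := hf.exists_source_eq
  refine ⟨e.restr W, f.restr V, he.restr hW, hf.restr hV, ⟨hqe, (hWf ▸ hqf).2⟩, ?_⟩
  rw [PartialEquiv.restr_source, PartialEquiv.restr_source, hVe, hWf]
  grind

theorem IsLocalChart.transition {e : PartialEquiv E F} {f : PartialEquiv E G}
    (he : IsLocalChart X e) (hf : IsLocalChart M f) (hfe : f.source = M ∩ e.source) :
    ContinuousOn (e.symm.trans f) (e.symm.trans f).source ∧
      ContinuousOn (e.symm.trans f).symm (e.symm.trans f).target ∧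
      IsOpen (e.symm.trans f).target := by
  have htarget : (e.symm.trans f).target = f.target := inter_eq_left.2 fun z hz =>
    (hfe ▸ f.map_target hz).2
  rw [htarget]
  refine ⟨?_, ?_, hf.isOpen_target⟩
  · exact hf.continuousOn.comp (he.continuousOn_symm.mono inter_subset_left) fun z hz => hz.2
  · exact he.continuousOn.comp hf.continuousOn_symm fun z hz => (hfe ▸ f.map_target hz).2

end Topology

section Manifold

open Filter Topology Metric

variable {E F G : Type*} [TopologicalSpace E] {X M : Set E}

theorem finrank_le_of_chartedSpace_subset [NormedAddCommGroup F] [InnerProductSpace ℝ F]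
    [FiniteDimensional ℝ F] [NormedAddCommGroup G] [InnerProductSpace ℝ G] [FiniteDimensional ℝ G]
    [ChartedSpace F X] [ChartedSpace G M] (hMX : M ⊆ X) (hM : M.Nonempty) :
    Module.finrank ℝ G ≤ Module.finrank ℝ F := by
  by_contra! hlt
  obtain ⟨q, hq⟩ := hM
  obtain ⟨e, f, he, hf, hqe, hfe⟩ := exists_isLocalChart_pair (F := F) (G := G) hMX hq
  obtain ⟨R, hR, hRf⟩ := nhds_basis_closedBall.mem_iff.1
    (hf.isOpen_target.mem_nhds (f.map_source (hfe.ge ⟨hq, hqe⟩)))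
  have hmaps : MapsTo f.symm f.target e.source := fun z hz => (hfe ▸ f.map_target hz).2
  refine not_injOn_closedBall_of_finrank_lt hlt hR (f := e ∘ f.symm)
    ((he.continuousOn.comp hf.continuousOn_symm hmaps).mono hRf) ?_
  exact (e.injOn.comp f.symm.injOn hmaps).mono hRf

/-- The set of points of the submanifold `M` of `X` adherent to a relatively open set `X ∩ u` of
which `M` contains the relative boundary is open in `M`. -/
theorem eventually_mem_closure_of_chartedSpace [NormedAddCommGroup F] [InnerProductSpace ℝ F]
    [FiniteDimensional ℝ F] [NormedAddCommGroup G] [NormedSpace ℝ G] [ChartedSpace F X]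
    [ChartedSpace G M] {u : Set E} (hMX : M ⊆ X) (hu : IsOpen u) (huM : Disjoint u M)
    (hcl : X ∩ closure (X ∩ u) ⊆ u ∪ M) {q : E} (hq : q ∈ M) (hqu : q ∈ closure (X ∩ u)) :
    ∀ᶠ r in 𝓝[M] q, r ∈ closure (X ∩ u) := by
  obtain ⟨e, f, he, hf, hqe, hfe⟩ := exists_isLocalChart_pair (F := F) (G := G) hMX hq
  have heX : e.source ⊆ X := by
    obtain ⟨V, -, hV⟩ := he.exists_source_eq
    exact hV ▸ inter_subset_left
  obtain ⟨hc, hc', hopen⟩ := he.transition hf hfe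
  set U : Set F := e.target ∩ e.symm ⁻¹' u
  have hU : IsOpen U := he.continuousOn_symm.isOpen_inter_preimage he.isOpen_target hu
  have hsource : ∀ x ∈ M ∩ e.source, e x ∈ (e.symm.trans f).source := fun x hx =>
    ⟨e.map_source hx.2, by simpa [e.left_inv hx.2, hfe] using hx⟩
  have hUe : MapsTo e.symm U (X ∩ u) := fun z hz => ⟨heX (e.map_target hz.1), hz.2⟩
  have hdisj : Disjoint U (e.symm.trans f).source := by
    refine Set.disjoint_left.2 fun z hzu hzM => Set.disjoint_left.1 huM hzu.2 ?_
    exact (hfe.le hzM.2).1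
  have hUcl : closure U ∩ e.target ⊆ U ∪ (e.symm.trans f).source := by
    rintro z ⟨hz, hze⟩
    have hzX : e.symm z ∈ closure (X ∩ u) :=
      ((he.continuousOn_symm z hze).mono inter_subset_left).mem_closure hz hUe
    refine (hcl ⟨heX (e.map_target hze), hzX⟩).imp (fun h => ⟨hze, h⟩) fun h => ⟨hze, ?_⟩
    exact hfe ▸ ⟨h, e.map_target hze⟩
  have hqX : Tendsto e (𝓝[X] q) (𝓝 (e q)) := he.continuousWithinAt hqe
  have hnear : ∀ᶠ x in 𝓝[X] q, x ∈ e.source := he.mem_nhdsWithin hqe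
  have hqU : e q ∈ closure U := by
    have := mem_closure_iff_nhdsWithin_neBot.1 hqu
    have hle : 𝓝[X ∩ u] q ≤ 𝓝[X] q := nhdsWithin_mono q inter_subset_left
    refine mem_closure_of_tendsto (hqX.mono_left hle) ?_
    filter_upwards [self_mem_nhdsWithin, hle hnear] with x hx hxe
    exact ⟨e.map_source hxe, mem_preimage.2 ((e.left_inv hxe).symm ▸ hx.2)⟩
  have htend : Tendsto e (𝓝[M] q) (𝓝[(e.symm.trans f).source] (e q)) := by
    refine tendsto_nhdsWithin_iff.2 ⟨hqX.mono_left (nhdsWithin_mono q hMX), ?_⟩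
    filter_upwards [self_mem_nhdsWithin, nhdsWithin_mono q hMX hnear] with x hxM hxe
    exact hsource x ⟨hxM, hxe⟩
  have hev := eventually_mem_closure_of_chart he.isOpen_target hU hc hc' hopen
    inter_subset_left hdisj hUcl (hsource q ⟨hq, hqe⟩) hqU
  filter_upwards [htend hev, nhdsWithin_mono q hMX hnear] with x hxU hxe
  exact e.left_inv hxe ▸
    ((he.continuousOn_symm _ (e.map_source hxe)).mono inter_subset_left).mem_closure hxU hUe

theorem subset_closure_of_chartedSpace [NormedAddCommGroup F] [InnerProductSpace ℝ F]
    [FiniteDimensional ℝ F] [NormedAddCommGroup G] [NormedSpace ℝ G] [ChartedSpace F X]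
    [ChartedSpace G M] {u : Set E} (hMX : M ⊆ X) (hu : IsOpen u) (huM : Disjoint u M)
    (hcl : X ∩ closure (X ∩ u) ⊆ u ∪ M) (hX : IsPreconnected X) (hM : IsPreconnected M)
    (hune : (X ∩ u).Nonempty) (hMne : M.Nonempty) : M ⊆ closure (X ∩ u) := by
  refine subset_of_isPreconnected_of_mem_nhdsWithin hM ?_
    (fun q hq => eventually_mem_closure_of_chartedSpace (F := F) (G := G) hMX hu huM hcl hq.1 hq.2)
    ((inter_subset_right.trans (closure_mono inter_subset_right)).trans closure_closure.subset)
  by_contra hne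
  obtain ⟨q, hq⟩ := hMne
  refine Set.disjoint_left.1 huM (subset_of_isPreconnected_of_mem_nhdsWithin hX hune
    (fun x hx => mem_nhdsWithin_of_mem_nhds (hu.mem_nhds hx.2)) (fun x hx => ?_) (hMX hq)) hq
  exact (hcl hx).resolve_right fun hxM => hne ⟨x, hxM, hx.2⟩

end Manifold

section Simanifold

open Metric

variable {N i j : ℕ} {X : Set (Euc N)}

theorem exists_isSimanifold_subset [ChartedSpace (EuclideanSpace ℝ (Fin i)) X] {V : Set (Euc N)}
    (hV : IsOpen V) (hne : (X ∩ V).Nonempty) : ∃ S, IsSimanifold i S ∧ S ⊆ X ∩ V := by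
  obtain ⟨p, hpX, hpV⟩ := hne
  set c := chartAt (EuclideanSpace ℝ (Fin i)) (⟨p, hpX⟩ : X)
  have hcV : IsOpen (c.target ∩ c.symm ⁻¹' (Subtype.val ⁻¹' V)) :=
    c.symm.isOpen_inter_preimage (hV.preimage continuous_subtype_val)
  obtain ⟨R, hR, hRV⟩ := Metric.isOpen_iff.1 hcV (c ⟨p, hpX⟩)
    ⟨mem_chart_target _ _, by simpa [c, mem_chart_source] using hpV⟩
  set B := ball (c ⟨p, hpX⟩) R
  let φ : B ≃ₜ Subtype.val '' (c.symm '' B) :=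
    (c.symm.homeomorphOfImageSubsetSource (hRV.trans inter_subset_left) rfl).trans
      (Topology.IsEmbedding.subtypeVal.homeomorphImage _)
  have hcontr : ContractibleSpace B := (convex_ball _ _).contractibleSpace (nonempty_ball.2 hR)
  refine ⟨Subtype.val '' (c.symm '' B), ⟨?_, φ.symm.contractibleSpace, ⟨?_⟩⟩, ?_⟩
  · exact ((nonempty_ball.2 hR).image _).image _
  · exact (isOpen_ball.isOpenEmbedding_subtypeVal.comp
      φ.symm.isOpenEmbedding).singletonChartedSpace
  · rintro _ ⟨_, ⟨z, hz, rfl⟩, rfl⟩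
    exact ⟨Subtype.coe_prop _, (hRV hz).2⟩

theorem sdim_inter_of_isOpen [ChartedSpace (EuclideanSpace ℝ (Fin i)) X] {V : Set (Euc N)}
    (hV : IsOpen V) (hne : (X ∩ V).Nonempty) : sdim (X ∩ V) = i := by
  obtain ⟨S, hS, hSX⟩ := exists_isSimanifold_subset (i := i) hV hne
  have hle : ∀ j ∈ {j | ∃ S : Set (Euc N), IsSimanifold j S ∧ S ⊆ X ∩ V}, j ≤ i := by
    rintro j ⟨S', ⟨hS'ne, -, ⟨_⟩⟩, hS'X⟩
    simpa using finrank_le_of_chartedSpace_subset (F := EuclideanSpace ℝ (Fin i))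
      (G := EuclideanSpace ℝ (Fin j)) (hS'X.trans inter_subset_left) hS'ne
  exact le_antisymm (csSup_le ⟨i, S, hS, hSX⟩ hle) (le_csSup ⟨i, hle⟩ ⟨S, hS, hSX⟩)

theorem IsSimanifold.sdim_eq (h : IsSimanifold i X) : sdim X = i := by
  obtain ⟨hne, -, ⟨_⟩⟩ := h
  simpa using sdim_inter_of_isOpen (i := i) isOpen_univ (by simpa using hne)

theorem IsSimanifold.isPreconnected (h : IsSimanifold i X) : IsPreconnected X :=
  have := h.2.1
  isPreconnected_iff_preconnectedSpace.2 inferInstance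

end Simanifold

/-! ### Sign arrangements and the crossing property -/

section SignArrangement

variable {E ι : Type*} {T : Set E} {σ : ι → E → SignType} {B B' : Set ι} {C C' : Finset ι}
  {τ : ι → SignType} {i j l p : ι} {s : SignType} {x y z u v : E}

/-- The points of `T` at which all the sign functions indexed by `B` vanish. -/
def zeroFlat (T : Set E) (σ : ι → E → SignType) (B : Set ι) : Set E :=
  {x | x ∈ T ∧ ∀ i ∈ B, σ i x = 0}

theorem zeroFlat_anti (h : B ⊆ B') : zeroFlat T σ B' ⊆ zeroFlat T σ B :=
  fun _ hx => ⟨hx.1, fun i hi => hx.2 i (h hi)⟩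

theorem mem_zeroFlat_insert : x ∈ zeroFlat T σ (insert i B) ↔ x ∈ zeroFlat T σ B ∧ σ i x = 0 := by
  simp only [zeroFlat, mem_ofPred_eq, forall_mem_insert]
  tauto

/-- The open region of the flat `zeroFlat T σ B` on which the signs indexed by `C` are
prescribed by `τ`; only used when `τ` is nonzero on `C`. -/
def cell (T : Set E) (σ : ι → E → SignType) (B : Set ι) (C : Finset ι) (τ : ι → SignType) : Set E :=
  {x | x ∈ zeroFlat T σ B ∧ ∀ i ∈ C, σ i x = τ i}

theorem cell_anti (h : C ⊆ C') : cell T σ B C' τ ⊆ cell T σ B C τ :=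
  fun _ hx => ⟨hx.1, fun i hi => hx.2 i (h hi)⟩

theorem mem_cell_insert : x ∈ cell T σ (insert i B) C τ ↔ x ∈ cell T σ B C τ ∧ σ i x = 0 := by
  simp only [cell, mem_ofPred_eq, mem_zeroFlat_insert]
  tauto

theorem mem_cell_of_mem_cell_erase [DecidableEq ι] (hx : x ∈ cell T σ B (C.erase j) τ)
    (hj : σ j x = τ j) : x ∈ cell T σ B C τ := by
  refine ⟨hx.1, fun i hi => ?_⟩
  obtain rfl | hij := eq_or_ne i j
  exacts [hj, hx.2 i (Finset.mem_erase.2 ⟨hij, hi⟩)]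

/-- The product order on sign vectors with `0` below `1` and `-1`: every nonzero sign of `x` is
also the sign of `y`. -/
def SignLE (σ : ι → E → SignType) (x y : E) : Prop :=
  ∀ i, σ i x ≠ 0 → σ i y = σ i x

theorem SignLE.trans (hxy : SignLE σ x y) (hyz : SignLE σ y z) : SignLE σ x z := fun i hi => by
  rw [hyz i (by rwa [hxy i hi]), hxy i hi]

theorem SignLE.mem_cell (hxy : SignLE σ x y) (hτ : ∀ i ∈ C, τ i ≠ 0) (hx : x ∈ cell T σ B' C τ)
    (hy : y ∈ zeroFlat T σ B) : y ∈ cell T σ B C τ :=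
  ⟨hy, fun i hi => by rw [hxy i (by rw [hx.2 i hi]; exact hτ i hi), hx.2 i hi]⟩

/-- An index `p` whose sign is not constant on the cell vanishes somewhere on the cell. -/
def Crosses (T : Set E) (σ : ι → E → SignType) (B : Set ι) (C : Finset ι) (τ : ι → SignType) :
    Prop :=
  ∀ ⦃p x y⦄, x ∈ cell T σ B C τ → y ∈ cell T σ B C τ → σ p x ≠ σ p y →
    ∃ z ∈ cell T σ B C τ, σ p z = 0

/-- The crossing property for all cells of all flats contained in `zeroFlat T σ B`. -/
def HereditarilyCrosses (T : Set E) (σ : ι → E → SignType) (B : Set ι) : Prop :=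
  ∀ ⦃B' : Set ι⦄, B ⊆ B' → ∀ ⦃C : Finset ι⦄ ⦃τ : ι → SignType⦄, (∀ i ∈ C, τ i ≠ 0) →
    Crosses T σ B' C τ

theorem HereditarilyCrosses.mono (h : HereditarilyCrosses T σ B) (hB : B ⊆ B') :
    HereditarilyCrosses T σ B' :=
  fun _ hB' => h (hB.trans hB')

theorem signType_eq_or_eq_neg {s t : SignType} (hs : s ≠ 0) (ht : t ≠ 0) : t = s ∨ t = -s := by
  decide +revert

/-- A minimal counterexample to the crossing property: `p` takes both signs on the cell without
vanishing there, while the smaller flats cross, and so does the cell once a sign condition is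
dropped. -/
structure IsMinimalNoncrossing [DecidableEq ι] (T : Set E) (σ : ι → E → SignType) (B : Set ι)
    (C : Finset ι) (τ : ι → SignType) (p : ι) : Prop where
  hereditarilyCrosses : ∀ i, (∃ x ∈ zeroFlat T σ B, σ i x ≠ 0) →
    HereditarilyCrosses T σ (insert i B)
  crosses_erase : ∀ j ∈ C, Crosses T σ B (C.erase j) τ
  sign_ne_zero : ∀ i ∈ C, τ i ≠ 0
  ne_zero : ∀ x ∈ cell T σ B C τ, σ p x ≠ 0
  exists_ne : ∃ u ∈ cell T σ B C τ, ∃ v ∈ cell T σ B C τ, σ p u ≠ σ p v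

namespace IsMinimalNoncrossing

variable [DecidableEq ι]

theorem hereditarilyCrosses_self (hm : IsMinimalNoncrossing T σ B C τ p) :
    HereditarilyCrosses T σ (insert p B) :=
  have ⟨u, hu, _⟩ := hm.exists_ne
  hm.hereditarilyCrosses p ⟨u, hu.1, hm.ne_zero u hu⟩

theorem hereditarilyCrosses_of_mem (hm : IsMinimalNoncrossing T σ B C τ p) (hj : j ∈ C) :
    HereditarilyCrosses T σ (insert j B) :=
  have ⟨u, hu, _⟩ := hm.exists_ne
  hm.hereditarilyCrosses j ⟨u, hu.1, by rw [hu.2 j hj]; exact hm.sign_ne_zero j hj⟩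

theorem sign_ne_zero_of_erase (hm : IsMinimalNoncrossing T σ B C τ p) (j : ι) :
    ∀ i ∈ C.erase j, τ i ≠ 0 :=
  fun i hi => hm.sign_ne_zero i (Finset.mem_of_mem_erase hi)

theorem exists_mem_cell_erase_zero (hm : IsMinimalNoncrossing T σ B C τ p) (hj : j ∈ C) :
    ∃ q, q ∈ cell T σ (insert p B) (C.erase j) τ := by
  obtain ⟨u, hu, v, hv, huv⟩ := hm.exists_ne
  obtain ⟨q, hq, hq0⟩ := hm.crosses_erase j hj (cell_anti (C.erase_subset j) hu)
    (cell_anti (C.erase_subset j) hv) huv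
  exact ⟨q, mem_cell_insert.2 ⟨hq, hq0⟩⟩

end IsMinimalNoncrossing

variable [TopologicalSpace E]

/-- A system of sign functions on `T`, locally constant where they do not vanish, such that each
`zeroFlat` and both sides of each index on it are connected and every zero of a sign function that
does not vanish on the whole flat is a limit of points of either sign. -/
structure IsSignArrangement (T : Set E) (σ : ι → E → SignType) : Prop where
  eventually_eq : ∀ i, ∀ x ∈ T, σ i x ≠ 0 → ∀ᶠ y in nhdsWithin x T, σ i y = σ i x
  isPreconnected_zeroFlat : ∀ B, IsPreconnected (zeroFlat T σ B)
  isPreconnected_side : ∀ B i s, s ≠ 0 → (∃ x ∈ zeroFlat T σ B, σ i x = 0) →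
    (∃ x ∈ zeroFlat T σ B, σ i x ≠ 0) → IsPreconnected {x | x ∈ zeroFlat T σ B ∧ σ i x = s}
  mem_closure_side : ∀ B i s, s ≠ 0 → (∃ x ∈ zeroFlat T σ B, σ i x ≠ 0) →
    ∀ x ∈ zeroFlat T σ B, σ i x = 0 → x ∈ closure {x | x ∈ zeroFlat T σ B ∧ σ i x = s}

namespace IsSignArrangement

theorem sign_eq_of_isPreconnected (h : IsSignArrangement T σ) {S : Set E} (hST : S ⊆ T)
    (hS : IsPreconnected S) (h0 : ∀ x ∈ S, σ i x ≠ 0) (hx : x ∈ S) (hy : y ∈ S) :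
    σ i x = σ i y := by
  have hcont : ContinuousOn (σ i) S := fun z hz => tendsto_nhds_of_eventually_eq <|
    nhdsWithin_mono z hST (h.eventually_eq i z (hST hz) (h0 z hz))
  exact (hS.image _ hcont).subsingleton (mem_image_of_mem _ hx) (mem_image_of_mem _ hy)

theorem isPreconnected_half (h : IsSignArrangement T σ) (B : Set ι) (i : ι) (hs : s ≠ 0) :
    IsPreconnected {x | x ∈ zeroFlat T σ B ∧ σ i x = s} := by
  by_cases hhalf : ∃ x ∈ zeroFlat T σ B, σ i x = s
  swap
  · rw [show {x | x ∈ zeroFlat T σ B ∧ σ i x = s} = ∅ from eq_empty_of_forall_notMem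
      fun x hx => hhalf ⟨x, hx⟩]
    exact isPreconnected_empty
  obtain ⟨x, hx, rfl⟩ := hhalf
  by_cases h0 : ∃ x ∈ zeroFlat T σ B, σ i x = 0
  · exact h.isPreconnected_side B i _ hs h0 ⟨x, hx, hs⟩
  · push Not at h0
    rw [show {y | y ∈ zeroFlat T σ B ∧ σ i y = σ i x} = zeroFlat T σ B from
      sep_eq_self_iff_mem_true.2 fun y hy => h.sign_eq_of_isPreconnected (fun z hz => hz.1)
        (h.isPreconnected_zeroFlat B) h0 hy hx]
    exact h.isPreconnected_zeroFlat B

section Finite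

variable [Finite ι]

theorem eventually_signLE (h : IsSignArrangement T σ) (hx : x ∈ T) :
    ∀ᶠ y in nhdsWithin x T, SignLE σ x y := by
  refine Filter.eventually_all.2 fun i => ?_
  by_cases hi : σ i x = 0
  · exact .of_forall fun y h0 => absurd hi h0
  · exact (h.eventually_eq i x hx hi).mono fun y hy _ => hy

theorem exists_signLE_of_mem_closure (h : IsSignArrangement T σ) {S : Set E} (hS : S ⊆ T)
    (hxT : x ∈ T) (hx : x ∈ closure S) : ∃ y ∈ S, SignLE σ x y := by
  have hfreq : ∃ᶠ y in nhdsWithin x T, y ∈ S := frequently_nhdsWithin_iff.2 <|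
    (mem_closure_iff_frequently.1 hx).mono fun y hy => ⟨hy, hS hy⟩
  exact (hfreq.and_eventually (h.eventually_signLE hxT)).exists

theorem exists_signLE_sign_eq (h : IsSignArrangement T σ) (hs : s ≠ 0)
    (hi : ∃ y ∈ zeroFlat T σ B, σ i y ≠ 0) (hx : x ∈ zeroFlat T σ B) (hxi : σ i x = 0) :
    ∃ y ∈ zeroFlat T σ B, σ i y = s ∧ SignLE σ x y := by
  obtain ⟨y, ⟨hy, hys⟩, hxy⟩ := h.exists_signLE_of_mem_closure (fun a ha => ha.1.1) hx.1
    (h.mem_closure_side B i s hs hi x hx hxi)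
  exact ⟨y, hy, hys, hxy⟩

theorem exists_mem_cell_signLE_of_sign_eq_zero (h : IsSignArrangement T σ) (C : Finset ι)
    (hB : HereditarilyCrosses T σ B) (hx : x ∈ zeroFlat T σ B) (hy : y ∈ zeroFlat T σ B)
    (hxC : ∀ i ∈ C, σ i x = 0) (hyC : ∀ i ∈ C, σ i y ≠ 0) :
    ∃ z ∈ cell T σ B C (σ · y), SignLE σ x z := by
  classical
  induction C using Finset.induction_on generalizing B y with
  | empty => exact ⟨x, ⟨hx, by simp⟩, fun _ _ => rfl⟩
  | insert l C _ ih =>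
    rw [Finset.forall_mem_insert] at hxC hyC
    obtain ⟨z, hz, hxz⟩ := ih hB hx hy hxC.2 hyC.2
    by_cases hzl : σ l z = σ l y
    · exact ⟨z, ⟨hz.1, (Finset.forall_mem_insert ..).2 ⟨hzl, hz.2⟩⟩, hxz⟩
    obtain ⟨w, hw, hwl⟩ := hB subset_rfl hyC.2 hz ⟨hy, fun _ _ => rfl⟩ hzl
    obtain ⟨z', hz', hxz'⟩ := ih (hB.mono (subset_insert l B))
      (mem_zeroFlat_insert.2 ⟨hx, hxC.1⟩) (mem_zeroFlat_insert.2 ⟨hw.1, hwl⟩) hxC.2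
      fun i hi => by rw [hw.2 i hi]; exact hyC.2 i hi
    rw [mem_cell_insert] at hz'
    obtain ⟨z'', hz'', hl'', hzz''⟩ :=
      h.exists_signLE_sign_eq hyC.1 ⟨y, hy, hyC.1⟩ hz'.1.1 hz'.2
    have hcell : z' ∈ cell T σ B C (σ · y) :=
      ⟨hz'.1.1, fun i hi => (hz'.1.2 i hi).trans (hw.2 i hi)⟩
    exact ⟨z'', ⟨hz'', (Finset.forall_mem_insert ..).2 ⟨hl'', (hzz''.mem_cell hyC.2 hcell hz'').2⟩⟩,
      hxz'.trans hzz''⟩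

/-- The composition axiom of oriented matroids, for the signs in `C`. -/
theorem exists_mem_cell_signLE (h : IsSignArrangement T σ) (hB : HereditarilyCrosses T σ B)
    (hτ : ∀ i ∈ C, τ i ≠ 0) (hx : x ∈ zeroFlat T σ B) (hy : y ∈ zeroFlat T σ B)
    (hxC : ∀ i ∈ C, σ i x = τ i ∨ σ i x = 0 ∧ σ i y = τ i) :
    ∃ z ∈ cell T σ B C τ, SignLE σ x z := by
  have hxy : ∀ i ∈ C, σ i x = 0 → σ i y = τ i := fun i hi h0 =>
    ((hxC i hi).resolve_left fun e => hτ i hi (e ▸ h0)).2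
  obtain ⟨z, hz, hxz⟩ := h.exists_mem_cell_signLE_of_sign_eq_zero (C.filter fun i => σ i x = 0)
    hB hx hy (by simp) (by
      simp only [Finset.mem_filter]
      exact fun i hi => hxy i hi.1 hi.2 ▸ hτ i hi.1)
  refine ⟨z, ⟨hz.1, fun i hi => ?_⟩, hxz⟩
  by_cases h0 : σ i x = 0
  · exact (hz.2 i (by simp [hi, h0])).trans (hxy i hi h0)
  · exact (hxz i h0).trans ((hxC i hi).resolve_right fun e => h0 e.1)

end Finite

end IsSignArrangement

namespace IsMinimalNoncrossing

variable [DecidableEq ι]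

theorem nonempty (h : IsSignArrangement T σ) (hm : IsMinimalNoncrossing T σ B C τ p) :
    C.Nonempty := by
  obtain ⟨u, hu, v, hv, huv⟩ := hm.exists_ne
  rw [Finset.nonempty_iff_ne_empty]
  rintro rfl
  exact huv (h.sign_eq_of_isPreconnected (fun z hz => hz.1) (h.isPreconnected_zeroFlat B)
    (fun x hx => hm.ne_zero x ⟨hx, by simp⟩) hu.1 hv.1)

variable [Finite ι]

theorem sign_eq_neg (h : IsSignArrangement T σ) (hm : IsMinimalNoncrossing T σ B C τ p)
    (hj : j ∈ C) (hx : x ∈ cell T σ (insert p B) (C.erase j) τ) : σ j x = -τ j := by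
  have hτj := hm.sign_ne_zero j hj
  obtain ⟨hxB, hxp⟩ := mem_cell_insert.1 hx
  refine (signType_eq_or_eq_neg hτj fun hxj => ?_).resolve_left
    fun e => hm.ne_zero x (mem_cell_of_mem_cell_erase hxB e) hxp
  by_cases hin : ∃ y ∈ zeroFlat T σ (insert p B), σ j y ≠ 0
  · obtain ⟨y, hy, hyj, hxy⟩ := h.exists_signLE_sign_eq hτj hin hx.1 hxj
    have hy' := mem_cell_insert.1 (hxy.mem_cell (hm.sign_ne_zero_of_erase j) hx hy)
    exact hm.ne_zero y (mem_cell_of_mem_cell_erase hy'.1 hyj) hy'.2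
  · push Not at hin
    obtain ⟨u, hu, v, hv, huv⟩ := hm.exists_ne
    refine huv (h.sign_eq_of_isPreconnected (fun z hz => hz.1.1) (h.isPreconnected_half B j hτj)
      ?_ ⟨hu.1, hu.2 j hj⟩ ⟨hv.1, hv.2 j hj⟩)
    rintro y ⟨hy, hyj⟩ hyp
    exact hτj (hyj ▸ hin y (mem_zeroFlat_insert.2 ⟨hy, hyp⟩))

theorem exists_mem_facet (h : IsSignArrangement T σ) (hm : IsMinimalNoncrossing T σ B C τ p)
    (hj : j ∈ C) : ∃ z, z ∈ cell T σ (insert j B) (C.erase j) τ := by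
  obtain ⟨u, hu, -⟩ := hm.exists_ne
  obtain ⟨q, hq⟩ := hm.exists_mem_cell_erase_zero hj
  have hne : σ j u ≠ σ j q := by
    rw [hu.2 j hj, hm.sign_eq_neg h hj hq]
    exact mt SignType.self_eq_neg_iff.1 (hm.sign_ne_zero j hj)
  obtain ⟨z, hz, hz0⟩ := hm.crosses_erase j hj (cell_anti (C.erase_subset j) hu)
    (mem_cell_insert.1 hq).1 hne
  exact ⟨z, mem_cell_insert.2 ⟨hz, hz0⟩⟩

theorem ne_zero_of_mem_facet (h : IsSignArrangement T σ) (hm : IsMinimalNoncrossing T σ B C τ p)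
    (hj : j ∈ C) (hx : x ∈ cell T σ (insert j B) (C.erase j) τ) : σ p x ≠ 0 := by
  obtain ⟨hxB, hxj⟩ := mem_cell_insert.1 hx
  intro hxp
  have := hm.sign_eq_neg h hj (mem_cell_insert.2 ⟨hxB, hxp⟩)
  exact hm.sign_ne_zero j hj (SignType.neg_eq_zero_iff.1 (this.symm.trans hxj))

theorem sign_eq_of_mem_facet (h : IsSignArrangement T σ) (hm : IsMinimalNoncrossing T σ B C τ p)
    (hj : j ∈ C) (hx : x ∈ cell T σ (insert j B) (C.erase j) τ)
    (hy : y ∈ cell T σ (insert j B) (C.erase j) τ) : σ p x = σ p y := by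
  by_contra hne
  obtain ⟨w, hw, hwp⟩ :=
    hm.hereditarilyCrosses_of_mem hj subset_rfl (hm.sign_ne_zero_of_erase j) hx hy hne
  exact hm.ne_zero_of_mem_facet h hj hw hwp

theorem ne_zero_of_signLE (h : IsSignArrangement T σ) (hm : IsMinimalNoncrossing T σ B C τ p)
    (hi : i ∈ C) (hx : x ∈ zeroFlat T σ B) (hxi : σ i x = τ i)
    (hxC : ∀ j ∈ C, σ j x = τ j ∨ σ j x = 0) : σ p x ≠ 0 := by
  intro hxp
  obtain ⟨q, hq⟩ := hm.exists_mem_cell_erase_zero hi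
  obtain ⟨y, hy, -⟩ := h.exists_mem_cell_signLE hm.hereditarilyCrosses_self hm.sign_ne_zero
    (mem_zeroFlat_insert.2 ⟨hx, hxp⟩) hq.1 fun j hj => by
      obtain rfl | hji := eq_or_ne j i
      · exact .inl hxi
      · exact (hxC j hj).imp_right fun e => ⟨e, hq.2 j (Finset.mem_erase.2 ⟨hji, hj⟩)⟩
  rw [mem_cell_insert] at hy
  exact hm.ne_zero y hy.1 hy.2

theorem exists_mem_facet_of_sign_eq_zero (h : IsSignArrangement T σ)
    (hm : IsMinimalNoncrossing T σ B C τ p) (hl : l ∈ C) (hx : x ∈ zeroFlat T σ B)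
    (hxC : ∀ j ∈ C, σ j x = τ j ∨ σ j x = 0) (hxl : σ l x = 0) :
    ∃ z ∈ cell T σ (insert l B) (C.erase l) τ, SignLE σ x z := by
  obtain ⟨z, hz⟩ := hm.exists_mem_facet h hl
  exact h.exists_mem_cell_signLE (hm.hereditarilyCrosses_of_mem hl) (hm.sign_ne_zero_of_erase l)
    (mem_zeroFlat_insert.2 ⟨hx, hxl⟩) hz.1 fun j hj =>
      (hxC j (Finset.mem_of_mem_erase hj)).imp_right fun e => ⟨e, hz.2 j hj⟩

/-- Otherwise the points of the cell on the side of `u` would be open and closed in the half-flat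
`σ i = τ i`. -/
theorem exists_facet_sign_eq (h : IsSignArrangement T σ) (hm : IsMinimalNoncrossing T σ B C τ p)
    (hu : u ∈ cell T σ B C τ) (hv : v ∈ cell T σ B C τ) (huv : σ p u ≠ σ p v) (hi : i ∈ C) :
    ∃ j ∈ C, j ≠ i ∧ ∃ z ∈ cell T σ (insert j B) (C.erase j) τ, σ p z = σ p u := by
  by_contra! hcon
  set S := {x | x ∈ zeroFlat T σ B ∧ σ i x = τ i}
  have hST : S ⊆ T := fun x hx => hx.1.1
  let W := {x | x ∈ cell T σ B C τ ∧ σ p x = σ p u}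
  have hopen : ∀ x ∈ S ∩ W, W ∈ nhdsWithin x S := by
    rintro x ⟨hxS, hx, hxu⟩
    filter_upwards [nhdsWithin_mono x hST (h.eventually_signLE (hST hxS)), self_mem_nhdsWithin]
      with y hxy hyS
    exact ⟨hxy.mem_cell hm.sign_ne_zero hx hyS.1, by rw [hxy p (hm.ne_zero x hx), hxu]⟩
  have hclosed : S ∩ closure (S ∩ W) ⊆ W := by
    rintro x ⟨hxS, hxW⟩
    obtain ⟨w, ⟨-, hw, hwu⟩, hxw⟩ :=
      h.exists_signLE_of_mem_closure (inter_subset_left.trans hST) (hST hxS) hxW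
    have hxC : ∀ j ∈ C, σ j x = τ j ∨ σ j x = 0 := fun j hj =>
      or_iff_not_imp_right.2 fun h0 => by rw [← hxw j h0, hw.2 j hj]
    have hxp : σ p x ≠ 0 := hm.ne_zero_of_signLE h hi hxS.1 hxS.2 hxC
    have hxu : σ p x = σ p u := by rw [← hxw p hxp, hwu]
    refine ⟨⟨hxS.1, fun l hl => (hxC l hl).resolve_right fun hxl => ?_⟩, hxu⟩
    obtain ⟨z, hz, hxz⟩ := hm.exists_mem_facet_of_sign_eq_zero h hl hxS.1 hxC hxl
    have hli : l ≠ i := fun e => hm.sign_ne_zero i hi (by rw [← hxS.2, ← e, hxl])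
    exact hcon l hl hli z hz (by rw [hxz p hxp, hxu])
  have hSW : S ⊆ W := subset_of_isPreconnected_of_mem_nhdsWithin
    (h.isPreconnected_half B i (hm.sign_ne_zero i hi)) ⟨u, ⟨hu.1, hu.2 i hi⟩, hu, rfl⟩ hopen
    hclosed
  exact huv (hSW ⟨hv.1, hv.2 i hi⟩).2.symm

theorem exists_mem_cell_erase_erase_zero (h : IsSignArrangement T σ)
    (hm : IsMinimalNoncrossing T σ B C τ p) (hi : i ∈ C) (hj : j ∈ C) (hij : i ≠ j) :
    ∃ o, o ∈ cell T σ (insert i (insert p B)) ((C.erase i).erase j) τ := by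
  obtain ⟨q, hq⟩ := hm.exists_mem_cell_erase_zero hi
  obtain ⟨r, hr⟩ := hm.exists_mem_cell_erase_zero hj
  have hqr : σ i q ≠ σ i r := by
    rw [hm.sign_eq_neg h hi hq, hr.2 i (Finset.mem_erase.2 ⟨hij, hi⟩)]
    exact mt SignType.neg_eq_self_iff.1 (hm.sign_ne_zero i hi)
  obtain ⟨o, ho, hoi⟩ := hm.hereditarilyCrosses_self subset_rfl
    (fun l hl => hm.sign_ne_zero_of_erase i l (Finset.mem_of_mem_erase hl))
    (cell_anti (Finset.erase_subset j _) hq)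
    (cell_anti (Finset.erase_right_comm (s := C) ▸ Finset.erase_subset i _) hr) hqr
  exact ⟨o, mem_cell_insert.2 ⟨ho, hoi⟩⟩

/-- From a common zero of `p` and `i`, moving to the side of `p` containing the facet `i` gives a
point which `j` separates from that facet. -/
theorem exists_mem_pencil (h : IsSignArrangement T σ) (hm : IsMinimalNoncrossing T σ B C τ p)
    (hi : i ∈ C) (hj : j ∈ C) (hij : i ≠ j)
    (hno : ∀ o ∈ cell T σ (insert i (insert p B)) ((C.erase i).erase j) τ, σ j o ≠ 0)
    (hz : z ∈ cell T σ (insert i B) (C.erase i) τ) :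
    ∃ x ∈ cell T σ (insert j (insert i B)) ((C.erase i).erase j) τ, σ p x = σ p z := by
  have hτi := hm.sign_ne_zero i hi
  have hτj := hm.sign_ne_zero j hj
  have hzp := hm.ne_zero_of_mem_facet h hi hz
  have hτD : ∀ l ∈ (C.erase i).erase j, τ l ≠ 0 := fun l hl =>
    hm.sign_ne_zero_of_erase i l (Finset.mem_of_mem_erase hl)
  obtain ⟨o, ho⟩ := hm.exists_mem_cell_erase_erase_zero h hi hj hij
  obtain ⟨ho', hoi⟩ := mem_cell_insert.1 ho
  have hoj : σ j o = -τ j := (signType_eq_or_eq_neg hτj (hno o ho)).resolve_left fun e => hτi <|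
    SignType.neg_eq_zero_iff.1 <|
      (hm.sign_eq_neg h hi (mem_cell_of_mem_cell_erase ho' e)).symm.trans hoi
  rw [insert_comm, mem_cell_insert] at ho
  obtain ⟨y, hy, hyp, hoy⟩ := h.exists_signLE_sign_eq hzp ⟨z, hz.1, hzp⟩ ho.1.1 ho.2
  have hyD := hoy.mem_cell hτD ho.1 hy
  have hyz : σ j y ≠ σ j z := by
    rw [hoy j (hno o (mem_cell_insert.2 ⟨ho', hoi⟩)), hoj,
      hz.2 j (Finset.mem_erase.2 ⟨hij.symm, hj⟩)]
    exact mt SignType.neg_eq_self_iff.1 hτj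
  have hzD : ∀ l ∈ (C.erase i).erase j, σ l z = τ l :=
    fun l hl => hz.2 l (Finset.mem_of_mem_erase hl)
  have hzne : ∀ l ∈ insert p ((C.erase i).erase j), σ l z ≠ 0 :=
    (Finset.forall_mem_insert ..).2 ⟨hzp, fun l hl => by rw [hzD l hl]; exact hτD l hl⟩
  obtain ⟨x, hx, hxj⟩ := hm.hereditarilyCrosses_of_mem hi subset_rfl hzne
    ⟨hy, (Finset.forall_mem_insert ..).2 ⟨hyp, fun l hl => (hyD.2 l hl).trans (hzD l hl).symm⟩⟩
    ⟨hz.1, fun _ _ => rfl⟩ hyz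
  obtain ⟨hxp, hxD⟩ := (Finset.forall_mem_insert ..).1 hx.2
  exact ⟨x, mem_cell_insert.2 ⟨⟨hx.1, fun l hl => (hxD l hl).trans (hzD l hl)⟩, hxj⟩, hxp⟩

theorem exists_common_zero (h : IsSignArrangement T σ) (hm : IsMinimalNoncrossing T σ B C τ p)
    (hi : i ∈ C) (hj : j ∈ C) (hy : y ∈ cell T σ (insert i B) (C.erase i) τ)
    (hz : z ∈ cell T σ (insert j B) (C.erase j) τ) (hyz : σ p y ≠ σ p z) :
    ∃ o ∈ cell T σ (insert i (insert p B)) ((C.erase i).erase j) τ, σ j o = 0 := by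
  by_contra! hno
  have hij : i ≠ j := by
    rintro rfl
    exact hyz (hm.sign_eq_of_mem_facet h hi hy hz)
  have hno' : ∀ o ∈ cell T σ (insert j (insert p B)) ((C.erase j).erase i) τ, σ i o ≠ 0 := by
    intro o ho hoi
    rw [Finset.erase_right_comm] at ho
    have := mem_cell_insert.2 ⟨ho, hoi⟩
    rw [insert_comm, mem_cell_insert] at this
    exact hno o this.1 this.2
  obtain ⟨x, hx, hxy⟩ := hm.exists_mem_pencil h hi hj hij hno hy
  obtain ⟨w, hw, hwz⟩ := hm.exists_mem_pencil h hj hi hij.symm hno' hz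
  rw [Finset.erase_right_comm, insert_comm] at hw
  obtain ⟨o, ho, hop⟩ := hm.hereditarilyCrosses_of_mem hi (subset_insert j _)
    (fun l hl => hm.sign_ne_zero_of_erase i l (Finset.mem_of_mem_erase hl)) hx hw
    (by rwa [hxy, hwz])
  have := mem_cell_insert.2 ⟨ho, hop⟩
  rw [insert_comm, mem_cell_insert, insert_comm] at this
  exact hno o this.1 this.2

theorem zeroFlat_subset_zero (h : IsSignArrangement T σ) (hm : IsMinimalNoncrossing T σ B C τ p)
    (hi : i ∈ C) (hj : j ∈ C) (hy : y ∈ cell T σ (insert i B) (C.erase i) τ)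
    (hz : z ∈ cell T σ (insert j B) (C.erase j) τ) (hyz : σ p y ≠ σ p z)
    (hx : x ∈ zeroFlat T σ (insert i (insert p B))) : σ j x = 0 := by
  by_contra hxj
  obtain ⟨o, ho, hoj⟩ := hm.exists_common_zero h hi hj hy hz hyz
  obtain ⟨w, hw, hwj, how⟩ := h.exists_signLE_sign_eq (hm.sign_ne_zero j hj) ⟨x, hx, hxj⟩ ho.1 hoj
  have hwD := how.mem_cell (fun l hl => hm.sign_ne_zero_of_erase i l (Finset.mem_of_mem_erase hl))
    ho hw
  obtain ⟨hwp, hwi⟩ := mem_cell_insert.1 (mem_cell_of_mem_cell_erase hwD hwj)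
  exact hm.sign_ne_zero i hi
    (SignType.neg_eq_zero_iff.1 ((hm.sign_eq_neg h hi hwp).symm.trans hwi))

end IsMinimalNoncrossing

theorem IsSignArrangement.not_isMinimalNoncrossing [DecidableEq ι] [Finite ι]
    (h : IsSignArrangement T σ) : ¬ IsMinimalNoncrossing T σ B C τ p := by
  intro hm
  obtain ⟨u, hu, v, hv, huv⟩ := hm.exists_ne
  obtain ⟨c, hc⟩ := hm.nonempty h
  obtain ⟨i, hi, -, x, hx, hxu⟩ := hm.exists_facet_sign_eq h hu hv huv hc
  obtain ⟨l, hl, hli, y, hy, hyu⟩ := hm.exists_facet_sign_eq h hu hv huv hi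
  obtain ⟨j, hj, -, z, hz, hzv⟩ := hm.exists_facet_sign_eq h hv hu huv.symm hc
  have hyz : σ p y ≠ σ p z := by rwa [hyu, hzv]
  have hlj : l ≠ j := by
    rintro rfl
    exact hyz (hm.sign_eq_of_mem_facet h hl hy hz)
  obtain ⟨o, ho, hoj⟩ := hm.exists_common_zero h hi hj hx hz (by rwa [hxu, hzv])
  have hol : σ l o = 0 := hm.zeroFlat_subset_zero h hj hl hz hy hyz.symm
    (mem_zeroFlat_insert.2 ⟨(mem_zeroFlat_insert.1 ho.1).1, hoj⟩)
  exact hm.sign_ne_zero l hl ((ho.2 l (by simp [hl, hli, hlj])).symm.trans hol)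

theorem IsSignArrangement.crosses_of_hereditarilyCrosses_insert [Finite ι]
    (h : IsSignArrangement T σ)
    (hB : ∀ i, (∃ x ∈ zeroFlat T σ B, σ i x ≠ 0) → HereditarilyCrosses T σ (insert i B))
    (hτ : ∀ i ∈ C, τ i ≠ 0) : Crosses T σ B C τ := by
  classical
  induction C using Finset.strongInduction with
  | H C ih =>
    intro p u v hu hv huv
    by_contra! hno
    exact h.not_isMinimalNoncrossing
      { hereditarilyCrosses := hB
        crosses_erase := fun j hj => ih _ (Finset.erase_ssubset hj)
          fun i hi => hτ i (Finset.mem_of_mem_erase hi)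
        sign_ne_zero := hτ
        ne_zero := hno
        exists_ne := ⟨u, hu, v, hv, huv⟩ }

theorem IsSignArrangement.crosses [Finite ι] (h : IsSignArrangement T σ)
    (hτ : ∀ i ∈ C, τ i ≠ 0) : Crosses T σ B C τ := by
  induction hk : {j | ∃ x ∈ zeroFlat T σ B, σ j x ≠ 0}.ncard using Nat.strong_induction_on
    generalizing B C τ with
  | _ k ih =>
    refine h.crosses_of_hereditarilyCrosses_insert (fun i hi B' hB' C' τ' hτ' => ?_) hτ
    have hBB' : B ⊆ B' := (subset_insert i B).trans hB'
    refine ih _ (hk ▸ ncard_lt_ncard ⟨?_, fun hsub => ?_⟩ (toFinite _)) hτ' rfl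
    · exact fun j ⟨x, hx, hxj⟩ => ⟨x, zeroFlat_anti hBB' hx, hxj⟩
    · obtain ⟨x, hx, hxi⟩ := hsub hi
      exact hxi (hx.2 i (hB' (mem_insert i B)))

end SignArrangement

/-! ### The Euler relation -/

section EulerRelation

variable {E ι : Type*} {T : Set E} {σ : ι → E → SignType} {B : Set ι} {C : Finset ι}
  {τ : ι → SignType} {p : ι} {x y : E} {d : Set E → ℕ}

/-- The Euler characteristic of `K` as a union of faces: the sum of `(-1) ^ d X` over the sign
vectors attained on `K`, where `X` is the flat on which the vanishing signs of the vector vanish. -/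
def eulerSum (T : Set E) (σ : ι → E → SignType) (d : Set E → ℕ) (K : Set E) : ℤ :=
  ∑ᶠ v ∈ (fun x i => σ i x) '' K, (-1) ^ d (zeroFlat T σ {i | v i = 0})

theorem eulerSum_eq_sum_sep [Finite ι] (d : Set E → ℕ) (K : Set E) (p : ι) :
    eulerSum T σ d K = ∑ s : SignType, eulerSum T σ d {x ∈ K | σ p x = s} := by
  have hK : (fun x i => σ i x) '' K =
      ⋃ s : SignType, (fun x i => σ i x) '' {x ∈ K | σ p x = s} := by
    rw [← image_iUnion]
    congr 1
    ext x
    simp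
  have hdisj : Pairwise
      (Function.onFun Disjoint fun s : SignType => (fun x i => σ i x) '' {x ∈ K | σ p x = s}) := by
    intro s t hst
    refine disjoint_left.2 ?_
    rintro _ ⟨x, ⟨-, hx⟩, rfl⟩ ⟨y, ⟨-, hy⟩, hxy⟩
    exact hst (hx.symm.trans ((congrFun hxy p).symm.trans hy))
  rw [eulerSum, hK, finsum_mem_iUnion hdisj fun s => toFinite _, finsum_eq_sum_of_fintype]
  rfl

theorem sep_cell_eq_cell_insert [DecidableEq ι] (hy : y ∈ cell T σ B C τ) :
    {x ∈ cell T σ B C τ | σ p x = σ p y} = cell T σ B (insert p C) (σ · y) := by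
  ext x
  simp only [cell, mem_ofPred_eq, Finset.forall_mem_insert, and_assoc]
  exact and_congr_right fun _ => and_comm.trans <|
    and_congr_right fun _ => forall₂_congr fun i hi => by rw [hy.2 i hi]

theorem eulerSum_cell_of_forall_mem (hBC : ∀ i, i ∈ B ∨ i ∈ C) (hτ : ∀ i ∈ C, τ i ≠ 0)
    (hx : x ∈ cell T σ B C τ) :
    eulerSum T σ d (cell T σ B C τ) = (-1) ^ d (zeroFlat T σ B) := by
  have himage : (fun x i => σ i x) '' cell T σ B C τ = {fun i => σ i x} := by
    refine (subset_singleton_iff.2 ?_).antisymm (singleton_subset_iff.2 (mem_image_of_mem _ hx))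
    rintro _ ⟨y, hy, rfl⟩
    funext i
    obtain hi | hi := hBC i
    exacts [(hy.1.2 i hi).trans (hx.1.2 i hi).symm, (hy.2 i hi).trans (hx.2 i hi).symm]
  have hzero : {i | σ i x = 0} = B := by
    ext i
    exact ⟨fun hi => (hBC i).resolve_right fun hC => hτ i hC ((hx.2 i hC).symm.trans hi),
      hx.1.2 i⟩
  rw [eulerSum, himage, finsum_mem_singleton, hzero]

namespace IsSignArrangement

variable [TopologicalSpace E] [Finite ι]

theorem exists_mem_cell_sign_eq (h : IsSignArrangement T σ) (hτ : ∀ i ∈ C, τ i ≠ 0)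
    (hp : ∃ x ∈ zeroFlat T σ B, σ p x ≠ 0) (hx : x ∈ cell T σ B C τ) (hxp : σ p x = 0)
    (s : SignType) : ∃ y ∈ cell T σ B C τ, σ p y = s := by
  obtain rfl | hs := eq_or_ne s 0
  · exact ⟨x, hx, hxp⟩
  obtain ⟨y, hy, hyp, hxy⟩ := h.exists_signLE_sign_eq hs hp hx.1 hxp
  exact ⟨y, hxy.mem_cell hτ hx hy, hyp⟩

/-- The index `p` either has constant sign on the cell, or cuts it into two open parts and one
part of smaller dimension. -/
theorem eulerSum_cell_of_sep (h : IsSignArrangement T σ)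
    (hd : ∀ B i, (∃ x ∈ zeroFlat T σ B, σ i x = 0) → (∃ x ∈ zeroFlat T σ B, σ i x ≠ 0) →
      d (zeroFlat T σ B) = d (zeroFlat T σ (insert i B)) + 1)
    (hτ : ∀ i ∈ C, τ i ≠ 0) (hx : x ∈ cell T σ B C τ)
    (hnonzero : ∀ y ∈ cell T σ B C τ, σ p y ≠ 0 →
      eulerSum T σ d {z ∈ cell T σ B C τ | σ p z = σ p y} = (-1) ^ d (zeroFlat T σ B))
    (hzero : ∀ y ∈ cell T σ B C τ, σ p y = 0 →
      eulerSum T σ d {z ∈ cell T σ B C τ | σ p z = 0} = (-1) ^ d (zeroFlat T σ (insert p B))) :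
    eulerSum T σ d (cell T σ B C τ) = (-1) ^ d (zeroFlat T σ B) := by
  by_cases hp0 : ∃ y ∈ cell T σ B C τ, σ p y = 0
  swap
  · push Not at hp0
    have hconst : ∀ z ∈ cell T σ B C τ, σ p z = σ p x := by
      by_contra! ⟨z, hz, hne⟩
      obtain ⟨w, hw, hwp⟩ := h.crosses hτ hz hx hne
      exact hp0 w hw hwp
    rw [← hnonzero x hx (hp0 x hx), sep_eq_self_iff_mem_true.2 hconst]
  obtain ⟨y, hy, hyp⟩ := hp0
  by_cases hp : ∃ z ∈ zeroFlat T σ B, σ p z ≠ 0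
  · have hside (s : SignType) (hs : s ≠ 0) :
        eulerSum T σ d {z ∈ cell T σ B C τ | σ p z = s} = (-1) ^ d (zeroFlat T σ B) := by
      obtain ⟨z, hz, rfl⟩ := h.exists_mem_cell_sign_eq hτ hp hy hyp s
      exact hnonzero z hz hs
    rw [eulerSum_eq_sum_sep d _ p, SignType.univ_eq, Finset.sum_insert (by decide),
      Finset.sum_pair (by decide), hzero y hy hyp, hside (-1) (by decide),
      hside 1 (by decide), hd B p ⟨y, hy.1, hyp⟩ hp]
    ring
  · push Not at hp
    have hflat : zeroFlat T σ (insert p B) = zeroFlat T σ B :=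
      ext fun z => mem_zeroFlat_insert.trans (and_iff_left_of_imp (hp z))
    rw [← hflat, ← hzero y hy hyp, sep_eq_self_iff_mem_true.2 fun z hz => hp z hz.1]

theorem eulerSum_cell (h : IsSignArrangement T σ)
    (hd : ∀ B i, (∃ x ∈ zeroFlat T σ B, σ i x = 0) → (∃ x ∈ zeroFlat T σ B, σ i x ≠ 0) →
      d (zeroFlat T σ B) = d (zeroFlat T σ (insert i B)) + 1)
    (R : Finset ι) (hR : ∀ i, i ∈ B ∨ i ∈ C ∨ i ∈ R) (hτ : ∀ i ∈ C, τ i ≠ 0)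
    (hx : x ∈ cell T σ B C τ) :
    eulerSum T σ d (cell T σ B C τ) = (-1) ^ d (zeroFlat T σ B) := by
  classical
  induction R using Finset.induction_on generalizing B C τ x with
  | empty => exact eulerSum_cell_of_forall_mem (by simpa using hR) hτ hx
  | insert p R _ ih =>
    refine h.eulerSum_cell_of_sep (p := p) hd hτ hx (fun y hy hyp => ?_) fun y hy hyp => ?_
    · rw [sep_cell_eq_cell_insert hy]
      exact ih (fun i => by have := hR i; grind)
        ((Finset.forall_mem_insert ..).2 ⟨hyp, fun i hi => by rw [hy.2 i hi]; exact hτ i hi⟩)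
        ⟨hy.1, fun _ _ => rfl⟩
    · rw [show {z ∈ cell T σ B C τ | σ p z = 0} = cell T σ (insert p B) C τ from
        ext fun z => mem_cell_insert.symm]
      exact ih (fun i => by have := hR i; grind) hτ (mem_cell_insert.2 ⟨hy, hyp⟩)

theorem eulerSum_zeroFlat (h : IsSignArrangement T σ)
    (hd : ∀ B i, (∃ x ∈ zeroFlat T σ B, σ i x = 0) → (∃ x ∈ zeroFlat T σ B, σ i x ≠ 0) →
      d (zeroFlat T σ B) = d (zeroFlat T σ (insert i B)) + 1)
    (hB : (zeroFlat T σ B).Nonempty) :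
    eulerSum T σ d (zeroFlat T σ B) = (-1) ^ d (zeroFlat T σ B) := by
  cases nonempty_fintype ι
  obtain ⟨x, hx⟩ := hB
  have hcell : cell T σ B ∅ 1 = zeroFlat T σ B := by simp [cell]
  rw [← h.eulerSum_cell hd Finset.univ (by simp) (by simp) (hcell.ge hx), hcell]

end IsSignArrangement

end EulerRelation

/-! ### Möbius inversion -/

theorem finsum_mem_sep_eq_sum_filter {α R : Type*} [AddCommMonoid R] (L : Finset α) (p : α → Prop)
    [DecidablePred p] (f : α → R) :
    ∑ᶠ a ∈ {a ∈ (L : Set α) | p a}, f a = ∑ a ∈ L with p a, f a := by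
  simp only [← finsum_mem_coe_finset, Finset.coe_filter, Finset.mem_coe]

section Mobius

variable {α R : Type*} [PartialOrder α] {S : Set α} {X Z : α}

/-- `mu` is the Möbius function of the reverse of the order of `S`; as for flats ordered by reverse
inclusion, `mu X Y` lives on the pairs with `Y ≤ X`. -/
structure IsMobius [NonAssocSemiring R] (S : Set α) (mu : α → α → R) : Prop where
  eq_zero : ∀ X ∈ S, ∀ Y ∈ S, ¬ Y ≤ X → mu X Y = 0
  self : ∀ X ∈ S, mu X X = 1
  sum_eq_zero : ∀ X ∈ S, ∀ Y ∈ S, Y ≤ X → Y ≠ X →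
    ∑ᶠ Z ∈ {Z ∈ S | Z ≤ X ∧ Y ≤ Z}, mu X Z = 0

variable [NonAssocSemiring R] {mu : α → α → R} {f g : α → R}

open Classical in
theorem IsMobius.finsum_mem_ge (hmu : IsMobius S mu) (hX : X ∈ S) (hZ : Z ∈ S) :
    ∑ᶠ Y ∈ {Y ∈ S | Z ≤ Y}, mu X Y = if X = Z then 1 else 0 := by
  have hIcc : ∑ᶠ Y ∈ {Y ∈ S | Z ≤ Y}, mu X Y = ∑ᶠ Y ∈ {Y ∈ S | Y ≤ X ∧ Z ≤ Y}, mu X Y := by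
    refine finsum_mem_inter_support_eq' _ _ _ fun Y hne => ?_
    have hYX (hY : Y ∈ S) : Y ≤ X := by
      by_contra hle
      exact hne (hmu.eq_zero X hX Y hY hle)
    simp only [mem_ofPred_eq]
    tauto
  rw [hIcc]
  split_ifs with hXZ
  · subst hXZ
    have hsingle : {Y ∈ S | Y ≤ X ∧ X ≤ Y} = {X} := by
      ext Y
      simp only [mem_ofPred_eq, mem_singleton_iff, ← le_antisymm_iff]
      exact and_iff_right_of_imp fun hY => hY ▸ hX
    rw [hsingle, finsum_mem_singleton, hmu.self X hX]
  · by_cases hZX : Z ≤ X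
    · exact hmu.sum_eq_zero X hX Z hZ hZX (Ne.symm hXZ)
    · exact finsum_mem_eq_zero_of_forall_eq_zero fun Y hY => absurd (hY.2.2.trans hY.2.1) hZX

theorem IsMobius.finsum_mem_mul (hmu : IsMobius S mu) (hS : S.Finite)
    (hfg : ∀ Y ∈ S, ∑ᶠ Z ∈ {Z ∈ S | Z ≤ Y}, f Z = g Y) (hX : X ∈ S) :
    ∑ᶠ Y ∈ S, mu X Y * g Y = f X := by
  classical
  obtain ⟨L, rfl⟩ := hS.exists_finset_coe
  calc ∑ᶠ Y ∈ (L : Set α), mu X Y * g Y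
      = ∑ Y ∈ L, ∑ Z ∈ L with Z ≤ Y, mu X Y * f Z := by
        rw [finsum_mem_coe_finset]
        refine Finset.sum_congr rfl fun Y hY => ?_
        rw [← hfg Y hY, finsum_mem_sep_eq_sum_filter, Finset.mul_sum]
    _ = ∑ Z ∈ L, ∑ Y ∈ L with Z ≤ Y, mu X Y * f Z :=
        Finset.sum_comm' fun Y Z => by
          simp only [Finset.mem_filter]
          tauto
    _ = ∑ Z ∈ L, (if X = Z then 1 else 0) * f Z :=
        Finset.sum_congr rfl fun Z hZ => by
          rw [← Finset.sum_mul, ← finsum_mem_sep_eq_sum_filter, hmu.finsum_mem_ge hX hZ]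
    _ = f X := by
        simp only [ite_mul, one_mul, zero_mul, Finset.sum_ite_eq, if_pos (Finset.mem_coe.1 hX)]

end Mobius

theorem finsum_mem_comp_eq {α β R : Type*} [NonAssocSemiring R] {K : Set β} {S : Set α}
    (hK : K.Finite) (hS : S.Finite) {φ : β → α} (hφ : MapsTo φ K S) (g : α → R) :
    ∑ᶠ b ∈ K, g (φ b) = ∑ᶠ a ∈ S, ({b ∈ K | φ b = a}.ncard : R) * g a := by
  classical
  lift K to Finset β using hK
  lift S to Finset α using hS
  rw [finsum_mem_coe_finset, finsum_mem_coe_finset, ← Finset.sum_fiberwise_of_maps_to hφ]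
  refine Finset.sum_congr rfl fun a _ => ?_
  have hconst : ∀ b ∈ K.filter (φ · = a), g (φ b) = g a := fun b hb => by
    rw [(Finset.mem_filter.1 hb).2]
  simp only [Finset.sum_congr rfl hconst, Finset.sum_const, nsmul_eq_mul, Finset.mem_coe,
    ← Finset.coe_filter, ncard_coe_finset]

theorem neg_one_pow_mul_neg_one_pow_sub {d n r : ℕ} (hd : d ≤ n) (hr : n - d ≤ r) :
    (-1 : ℤ) ^ r * (-1) ^ (r - (n - d)) = (-1) ^ n * (-1) ^ d := by
  rw [← pow_add, ← pow_add]
  refine neg_one_pow_congr ?_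
  rw [Nat.even_add, Nat.even_add, Nat.even_sub hr, Nat.even_sub hd]
  tauto

/-! ### Dehyperplane arrangements as sign arrangements -/

section Arrangement

variable {N n : ℕ} {T : Set (Euc N)}

namespace Dehyperplane

variable (P : Dehyperplane N n T) {X : Set (Euc N)} {x : Euc N} {s t : SignType}

open Classical in
/-- The sign `ε` such that `x ∈ P^ε`; by convention `0` for `x` outside `T`. -/
def sign (x : Euc N) : SignType :=
  if x ∈ P.plus then 1 else if x ∈ P.minus then -1 else 0

theorem disjoint_part (hst : s ≠ t) : Disjoint (P.part s) (P.part t) := by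
  cases s <;> cases t
  exacts [absurd rfl hst, P.disj_Pm, P.disj_pP.symm, P.disj_Pm.symm, absurd rfl hst, P.disj_pm.symm,
    P.disj_pP, P.disj_pm, absurd rfl hst]

theorem mem_part_sign (hx : x ∈ T) : x ∈ P.part (P.sign x) := by
  rw [← P.union_eq] at hx
  unfold sign
  split_ifs with hplus hminus
  exacts [hplus, hminus, (hx.resolve_right hminus).resolve_left hplus]

theorem sign_eq_iff (hx : x ∈ T) : P.sign x = s ↔ x ∈ P.part s := by
  refine ⟨fun h => h ▸ P.mem_part_sign hx, fun h => ?_⟩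
  by_contra hne
  exact disjoint_left.1 (P.disjoint_part hne) (P.mem_part_sign hx) h

theorem closure_part_inter_closure_part_neg (hs : s ≠ 0) :
    closure (P.part s) ∩ closure (P.part (-s)) = P.P := by
  cases s
  exacts [absurd rfl hs, (inter_comm _ _).trans P.closure_eq, P.closure_eq]

theorem disjoint_compl_closure_part_neg (hs : s ≠ 0) : Disjoint (closure (P.part (-s)))ᶜ P.P := by
  rw [disjoint_compl_left_iff_subset, ← P.closure_part_inter_closure_part_neg hs]
  exact inter_subset_right

theorem mem_part_iff_notMem_closure (hx : x ∈ T) (hs : s ≠ 0) :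
    x ∈ P.part s ↔ x ∉ closure (P.part (-s)) := by
  constructor
  · intro hxs hxc
    have hxP : x ∈ P.P := P.closure_part_inter_closure_part_neg hs ▸ ⟨subset_closure hxs, hxc⟩
    exact disjoint_left.1 (P.disjoint_part hs) hxs hxP
  · intro hxc
    rw [← P.sign_eq_iff hx]
    have hzero : P.sign x ≠ 0 := fun h =>
      disjoint_left.1 (P.disjoint_compl_closure_part_neg hs) hxc ((P.sign_eq_iff hx).1 h)
    have hneg : P.sign x ≠ -s := fun h => hxc (subset_closure ((P.sign_eq_iff hx).1 h))
    have hsigns : ∀ s t : SignType, s ≠ 0 → t ≠ 0 → t ≠ -s → t = s := by decide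
    exact hsigns _ _ hs hzero hneg

theorem part_inter_eq (hX : X ⊆ T) (hs : s ≠ 0) :
    P.part s ∩ X = X ∩ (closure (P.part (-s)))ᶜ := by
  ext x
  rw [inter_comm]
  exact and_congr_right fun hx => P.mem_part_iff_notMem_closure (hX hx) hs

end Dehyperplane

variable {A : Set (Dehyperplane N n T)} {X : Set (Euc N)} {P : Dehyperplane N n T} {s : SignType}

theorem subset_of_mem_flats (hX : X ∈ flats A) : X ⊆ T := by
  obtain ⟨-, B, -, rfl⟩ := hX
  exact inter_subset_left

theorem IsDA.exists_isSimanifold_inter (hA : IsDA n T A) (hP : P ∈ A) (hX : X ∈ flats A)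
    (hne : (P.P ∩ X).Nonempty) (hsub : ¬ X ⊆ P.P) :
    ∃ i < n, IsSimanifold i (P.P ∩ X) ∧ ∀ s ≠ 0, IsSimanifold (i + 1) (P.part s ∩ X) := by
  obtain ⟨i, hi, hin, hzero, hplus, hminus⟩ := (hA.2 P hP X hX hne).resolve_left hsub
  obtain ⟨i, rfl⟩ := Nat.exists_eq_add_of_le' hi
  refine ⟨i, hin, hzero, fun s hs => ?_⟩
  cases s
  exacts [absurd rfl hs, hminus, hplus]

theorem IsDA.exists_isSimanifold (hA : IsDA n T A) (hT : IsSimanifold n T) (hX : X ∈ flats A) :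
    ∃ d ≤ n, IsSimanifold d X := by
  obtain ⟨hne, B, hBA, rfl⟩ := hX
  induction B, hA.1.subset hBA using Set.Finite.induction_on with
  | empty => exact ⟨n, le_rfl, by simpa using hT⟩
  | @insert P B _ _ ih =>
    rw [biInter_insert, inter_left_comm] at hne ⊢
    have hne' := hne.mono inter_subset_right
    obtain ⟨hP, hBA'⟩ := insert_subset_iff.1 hBA
    by_cases hsub : T ∩ ⋂ Q ∈ B, Q.P ⊆ P.P
    · rw [inter_eq_self_of_subset_right hsub]
      exact ih hBA' hne'
    · obtain ⟨i, hi, hzero, -⟩ :=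
        hA.exists_isSimanifold_inter hP ⟨hne', B, hBA', rfl⟩ hne hsub
      exact ⟨i, hi.le, hzero⟩

theorem IsDA.sdim_le (hA : IsDA n T A) (hT : IsSimanifold n T) (hX : X ∈ flats A) :
    sdim X ≤ n := by
  obtain ⟨d, hd, hXd⟩ := hA.exists_isSimanifold hT hX
  exact hXd.sdim_eq.trans_le hd

theorem IsDA.sdim_eq_sdim_inter_add_one (hA : IsDA n T A) (hT : IsSimanifold n T) (hP : P ∈ A)
    (hX : X ∈ flats A) (hne : (P.P ∩ X).Nonempty) (hsub : ¬ X ⊆ P.P) :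
    sdim X = sdim (P.P ∩ X) + 1 := by
  obtain ⟨d, -, hXd⟩ := hA.exists_isSimanifold hT hX
  obtain ⟨i, -, hzero, hside⟩ := hA.exists_isSimanifold_inter hP hX hne hsub
  obtain ⟨chart⟩ := hXd.2.2
  have hplus := hside 1 (by decide)
  have hdim := hplus.sdim_eq
  have hplus_ne := hplus.1
  rw [P.part_inter_eq (subset_of_mem_flats hX) (by decide)] at hdim hplus_ne
  rw [hXd.sdim_eq, hzero.sdim_eq, ← hdim,
    sdim_inter_of_isOpen (i := d) isClosed_closure.isOpen_compl hplus_ne]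

theorem IsDA.inter_subset_closure (hA : IsDA n T A) (hT : IsSimanifold n T) (hP : P ∈ A)
    (hX : X ∈ flats A) (hne : (P.P ∩ X).Nonempty) (hsub : ¬ X ⊆ P.P) (hs : s ≠ 0) :
    P.P ∩ X ⊆ closure (P.part s ∩ X) := by
  obtain ⟨d, -, hXd⟩ := hA.exists_isSimanifold hT hX
  obtain ⟨i, -, hzero, hside⟩ := hA.exists_isSimanifold_inter hP hX hne hsub
  obtain ⟨chartX⟩ := hXd.2.2
  obtain ⟨chartM⟩ := hzero.2.2
  have hpart := P.part_inter_eq (subset_of_mem_flats hX) hs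
  have hcl : X ∩ closure (X ∩ (closure (P.part (-s)))ᶜ) ⊆ (closure (P.part (-s)))ᶜ ∪ P.P ∩ X := by
    rintro x ⟨hxX, hx⟩
    rw [← hpart] at hx
    by_cases hxc : x ∈ closure (P.part (-s))
    · exact Or.inr ⟨P.closure_part_inter_closure_part_neg hs ▸
        ⟨closure_mono inter_subset_left hx, hxc⟩, hxX⟩
    · exact Or.inl hxc
  have hside_ne := (hside s hs).1
  rw [hpart] at hside_ne ⊢
  exact subset_closure_of_chartedSpace (F := EuclideanSpace ℝ (Fin d))
    (G := EuclideanSpace ℝ (Fin i)) inter_subset_right isClosed_closure.isOpen_compl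
    ((P.disjoint_compl_closure_part_neg hs).mono_right inter_subset_left) hcl
    hXd.isPreconnected hzero.isPreconnected hside_ne hne

/-- The sign functions of the members of an arrangement. -/
def signs (A : Set (Dehyperplane N n T)) (P : A) (x : Euc N) : SignType :=
  P.1.sign x

theorem signs_eq_iff {P : A} {x : Euc N} (hx : x ∈ T) : signs A P x = s ↔ x ∈ P.1.part s :=
  P.1.sign_eq_iff hx

theorem mem_flats_iff : X ∈ flats A ↔ X.Nonempty ∧ ∃ B : Set A, X = zeroFlat T (signs A) B := by
  have hflat (B : Set A) : zeroFlat T (signs A) B = T ∩ ⋂ P ∈ Subtype.val '' B, P.P := by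
    ext x
    simp only [zeroFlat, mem_ofPred_eq, biInter_image, mem_inter_iff, mem_iInter]
    exact and_congr_right fun hx => forall₂_congr fun _ _ => signs_eq_iff hx
  simp only [hflat]
  exact and_congr_right' (Subtype.exists_set_subtype
    fun B : Set (Dehyperplane N n T) => X = T ∩ ⋂ P ∈ B, P.P).symm

theorem finite_flats (hA : A.Finite) : (flats A).Finite := by
  have := hA.to_subtype
  refine (finite_range (zeroFlat T (signs A))).subset fun X hX => ?_
  obtain ⟨-, B, rfl⟩ := mem_flats_iff.1 hX
  exact mem_range_self B

variable {B : Set A}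

theorem zeroFlat_mem_flats (hne : (zeroFlat T (signs A) B).Nonempty) :
    zeroFlat T (signs A) B ∈ flats A :=
  mem_flats_iff.2 ⟨hne, B, rfl⟩

theorem setOf_mem_zeroFlat_and_signs_eq (P : A) :
    {x | x ∈ zeroFlat T (signs A) B ∧ signs A P x = s} = P.1.part s ∩ zeroFlat T (signs A) B := by
  ext x
  rw [inter_comm]
  exact and_congr_right fun hx => signs_eq_iff hx.1

theorem zeroFlat_signs_insert (P : A) :
    zeroFlat T (signs A) (insert P B) = P.1.P ∩ zeroFlat T (signs A) B :=
  (ext fun _ => mem_zeroFlat_insert).trans (setOf_mem_zeroFlat_and_signs_eq P)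

theorem inter_zeroFlat_nonempty {P : A} (h : ∃ x ∈ zeroFlat T (signs A) B, signs A P x = 0) :
    (P.1.P ∩ zeroFlat T (signs A) B).Nonempty := by
  obtain ⟨x, hx, hx0⟩ := h
  exact ⟨x, (signs_eq_iff hx.1).1 hx0, hx⟩

theorem not_zeroFlat_subset {P : A} (h : ∃ x ∈ zeroFlat T (signs A) B, signs A P x ≠ 0) :
    ¬ zeroFlat T (signs A) B ⊆ P.1.P := by
  obtain ⟨x, hx, hx0⟩ := h
  exact fun hsub => hx0 ((signs_eq_iff hx.1).2 (hsub hx))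

theorem IsDA.isSignArrangement (hA : IsDA n T A) (hT : IsSimanifold n T) :
    IsSignArrangement T (signs A) where
  eventually_eq P x hx hx0 := by
    have hxs := (P.1.mem_part_iff_notMem_closure hx hx0).1 ((signs_eq_iff hx).1 rfl)
    filter_upwards [mem_nhdsWithin_of_mem_nhds (isClosed_closure.isOpen_compl.mem_nhds hxs),
      self_mem_nhdsWithin] with y hy hyT
    exact (signs_eq_iff hyT).2 ((P.1.mem_part_iff_notMem_closure hyT hx0).2 hy)
  isPreconnected_zeroFlat B := by
    obtain hempty | hne := (zeroFlat T (signs A) B).eq_empty_or_nonempty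
    · exact hempty ▸ isPreconnected_empty
    · obtain ⟨d, -, hX⟩ := hA.exists_isSimanifold hT (zeroFlat_mem_flats hne)
      exact hX.isPreconnected
  isPreconnected_side B P s hs hzero hne := by
    obtain ⟨i, -, -, hside⟩ := hA.exists_isSimanifold_inter P.2
      (zeroFlat_mem_flats (hzero.imp fun _ => And.left)) (inter_zeroFlat_nonempty hzero)
      (not_zeroFlat_subset hne)
    exact setOf_mem_zeroFlat_and_signs_eq P ▸ (hside s hs).isPreconnected
  mem_closure_side B P s hs hne x hx hx0 := by
    rw [setOf_mem_zeroFlat_and_signs_eq]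
    have hxP := (signs_eq_iff hx.1).1 hx0
    exact hA.inter_subset_closure hT P.2 (zeroFlat_mem_flats ⟨x, hx⟩) ⟨x, hxP, hx⟩
      (not_zeroFlat_subset hne) hs ⟨hxP, hx⟩

end Arrangement

/-! ### Counting faces by the flats they span -/

section Face

variable {N n : ℕ} {T : Set (Euc N)} {A : Set (Dehyperplane N n T)} {F X Y : Set (Euc N)}
  {v w : A → SignType} {B : Set A} {x : Euc N}

/-- The points of `T` with sign vector `v`; the faces of `A` are the nonempty sets of this form. -/
def face (A : Set (Dehyperplane N n T)) (v : A → SignType) : Set (Euc N) :=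
  {x | x ∈ T ∧ ∀ P, signs A P x = v P}

theorem isFace_iff : IsFace A F ↔ F.Nonempty ∧ ∃ v : A → SignType, F = face A v := by
  classical
  have hface (ε : Dehyperplane N n T → SignType) :
      T ∩ ⋂ P ∈ A, P.part (ε P) = face A fun P => ε P.1 := by
    ext x
    simp only [face, mem_ofPred_eq, mem_inter_iff, mem_iInter, Subtype.forall]
    exact and_congr_right fun hx => forall₂_congr fun P hP => (signs_eq_iff (P := ⟨P, hP⟩) hx).symm
  simp only [IsFace, hface]
  refine and_congr_right' ⟨fun ⟨ε, hε⟩ => ⟨_, hε⟩, fun ⟨v, hv⟩ => ?_⟩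
  obtain ⟨ε, rfl⟩ := Subtype.val_injective.surjective_comp_right v
  exact ⟨ε, hv⟩

theorem face_subset_zeroFlat_iff (hv : (face A v).Nonempty) :
    face A v ⊆ zeroFlat T (signs A) B ↔ B ⊆ {P | v P = 0} := by
  obtain ⟨x, hx⟩ := hv
  refine ⟨fun h P hP => (hx.2 P).symm.trans ((h hx).2 P hP), fun h y hy => ⟨hy.1, fun P hP => ?_⟩⟩
  exact (hy.2 P).trans (h hP)

theorem sdim_face (hA : IsDA n T A) (hT : IsSimanifold n T) (hv : (face A v).Nonempty) :
    sdim (face A v) = sdim (zeroFlat T (signs A) {P | v P = 0}) := by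
  have := hA.1.to_subtype
  have hsupport := (face_subset_zeroFlat_iff hv).2 Subset.rfl
  obtain ⟨d, -, hX⟩ := hA.exists_isSimanifold hT (zeroFlat_mem_flats (hv.mono hsupport))
  obtain ⟨chart⟩ := hX.2.2
  have hopen : IsOpen (⋂ P ∈ {P : A | v P ≠ 0}, (closure (P.1.part (-v P)))ᶜ) :=
    (toFinite _).isOpen_biInter fun _ _ => isClosed_closure.isOpen_compl
  have hface : face A v = zeroFlat T (signs A) {P | v P = 0} ∩
      ⋂ P ∈ {P : A | v P ≠ 0}, (closure (P.1.part (-v P)))ᶜ := by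
    ext x
    simp only [face, zeroFlat, mem_ofPred_eq, mem_inter_iff, mem_iInter, mem_compl_iff, and_assoc]
    refine and_congr_right fun hx => ?_
    have hside (P : A) (hP : v P ≠ 0) : signs A P x = v P ↔ x ∉ closure (P.1.part (-v P)) :=
      (signs_eq_iff hx).trans (P.1.mem_part_iff_notMem_closure hx hP)
    refine ⟨fun h => ⟨fun P hP => (h P).trans hP, fun P hP => (hside P hP).1 (h P)⟩,
      fun h P => ?_⟩
    by_cases hP : v P = 0
    · exact (h.1 P hP).trans hP.symm
    · exact (hside P hP).2 (h.2 P hP)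
  rw [hface] at hv ⊢
  rw [sdim_inter_of_isOpen (i := d) hopen hv, hX.sdim_eq]

theorem bijOn_face (hY : Y ∈ flats A) :
    BijOn (face A) ((fun x P => signs A P x) '' Y) {F | IsFace A F ∧ F ⊆ Y} := by
  obtain ⟨-, B, rfl⟩ := mem_flats_iff.1 hY
  have hmem {x : Euc N} (hx : x ∈ T) : x ∈ face A fun P => signs A P x := ⟨hx, fun _ => rfl⟩
  have hvec {v : A → SignType} {x : Euc N} (hx : x ∈ face A v) : (fun P => signs A P x) = v :=
    funext hx.2
  refine ⟨?_, ?_, ?_⟩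
  · rintro _ ⟨x, hx, rfl⟩
    exact ⟨isFace_iff.2 ⟨⟨x, hmem hx.1⟩, _, rfl⟩,
      (face_subset_zeroFlat_iff ⟨x, hmem hx.1⟩).2 hx.2⟩
  · rintro _ ⟨x, hx, rfl⟩ w - hxw
    exact hvec (hxw ▸ hmem hx.1)
  · rintro F ⟨hF, hFY⟩
    obtain ⟨⟨x, hx⟩, v, rfl⟩ := isFace_iff.1 hF
    exact ⟨v, ⟨x, hFY hx, hvec hx⟩, rfl⟩

theorem finite_setOf_isFace (hA : A.Finite) : {F | IsFace A F}.Finite := by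
  have := hA.to_subtype
  refine (finite_range (face A)).subset fun F hF => ?_
  obtain ⟨-, v, rfl⟩ := isFace_iff.1 hF
  exact mem_range_self v

theorem IsDA.finsum_mem_face_neg_one_pow_sdim (hA : IsDA n T A) (hT : IsSimanifold n T)
    (hY : Y ∈ flats A) :
    ∑ᶠ F ∈ {F | IsFace A F ∧ F ⊆ Y}, (-1 : ℤ) ^ sdim F = (-1) ^ sdim Y := by
  have := hA.1.to_subtype
  have hdim (v) (hv : v ∈ (fun x P => signs A P x) '' Y) :
      (-1 : ℤ) ^ sdim (zeroFlat T (signs A) {P | v P = 0}) = (-1) ^ sdim (face A v) := by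
    rw [sdim_face hA hT (isFace_iff.1 ((bijOn_face hY).mapsTo hv).1).1]
  rw [← finsum_mem_eq_of_bijOn (face A) (bijOn_face hY) hdim]
  obtain ⟨hne, B, rfl⟩ := mem_flats_iff.1 hY
  refine (hA.isSignArrangement hT).eulerSum_zeroFlat (fun B P hzero hnz => ?_) hne
  rw [zeroFlat_signs_insert]
  exact hA.sdim_eq_sdim_inter_add_one hT P.2 (zeroFlat_mem_flats (hzero.imp fun _ => And.left))
    (inter_zeroFlat_nonempty hzero) (not_zeroFlat_subset hnz)

/-- The smallest flat of `A` containing `F`. -/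
def flatSpan (A : Set (Dehyperplane N n T)) (F : Set (Euc N)) : Set (Euc N) :=
  T ∩ ⋂ P ∈ {P ∈ A | F ⊆ P.P}, P.P

theorem flatSpan_subset_iff (hF : F ⊆ T) (hY : Y ∈ flats A) : flatSpan A F ⊆ Y ↔ F ⊆ Y := by
  obtain ⟨-, B, hBA, rfl⟩ := hY
  refine ⟨(subset_inter hF (subset_iInter₂ fun P hP => hP.2)).trans, fun h => ?_⟩
  refine inter_subset_inter_right T (biInter_subset_biInter_left fun P hP => ⟨hBA hP, ?_⟩)
  exact (h.trans inter_subset_right).trans (biInter_subset_of_mem hP)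

theorem IsFace.subset (hF : IsFace A F) : F ⊆ T := by
  obtain ⟨-, ε, rfl⟩ := hF
  exact inter_subset_left

theorem IsFace.flatSpan_mem_flats (hF : IsFace A F) : flatSpan A F ∈ flats A :=
  ⟨hF.1.mono (subset_inter hF.subset (subset_iInter₂ fun _ hP => hP.2)), _, sep_subset _ _, rfl⟩

theorem flatSpan_face (hv : (face A v).Nonempty) :
    flatSpan A (face A v) = zeroFlat T (signs A) {P | v P = 0} := by
  have hsupport := (face_subset_zeroFlat_iff hv).2 Subset.rfl
  have hF : IsFace A (face A v) := isFace_iff.2 ⟨hv, v, rfl⟩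
  refine ((flatSpan_subset_iff hF.subset (zeroFlat_mem_flats (hv.mono hsupport))).2
    hsupport).antisymm ?_
  obtain ⟨-, B, hB⟩ := mem_flats_iff.1 hF.flatSpan_mem_flats
  have hsub := (flatSpan_subset_iff hF.subset hF.flatSpan_mem_flats).1 Subset.rfl
  rw [hB] at hsub ⊢
  exact zeroFlat_anti ((face_subset_zeroFlat_iff hv).1 hsub)

theorem IsFace.sdim_flatSpan (hF : IsFace A F) (hA : IsDA n T A) (hT : IsSimanifold n T) :
    sdim (flatSpan A F) = sdim F := by
  obtain ⟨hne, v, rfl⟩ := isFace_iff.1 hF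
  rw [flatSpan_face hne, sdim_face hA hT hne]

/-- The number of chambers of the restriction `A^X`, counted as the faces of `A` that span `X`. -/
def chamberCount (A : Set (Dehyperplane N n T)) (X : Set (Euc N)) : ℕ :=
  {F | IsFace A F ∧ flatSpan A F = X}.ncard

theorem IsDA.sum_ncard_isFace_mul_pow (hA : IsDA n T A) (hT : IsSimanifold n T) (x : ℤ) :
    ∑ i ∈ Finset.range (n + 1), ({F | IsFace A F ∧ sdim F = i}.ncard : ℤ) * x ^ (n - i) =
      ∑ᶠ X ∈ flats A, (chamberCount A X : ℤ) * x ^ (n - sdim X) := by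
  have hdim : MapsTo sdim {F | IsFace A F} (Finset.range (n + 1)) := fun F hF => by
    rw [Finset.coe_range, mem_Iio, Nat.lt_succ_iff, ← hF.sdim_flatSpan hA hT]
    exact hA.sdim_le hT hF.flatSpan_mem_flats
  calc ∑ i ∈ Finset.range (n + 1), ({F | IsFace A F ∧ sdim F = i}.ncard : ℤ) * x ^ (n - i)
      = ∑ᶠ F ∈ {F | IsFace A F}, x ^ (n - sdim F) := by
        rw [finsum_mem_comp_eq (finite_setOf_isFace hA.1) (Finset.finite_toSet _) hdim
          fun i => x ^ (n - i), finsum_mem_coe_finset]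
        rfl
    _ = ∑ᶠ F ∈ {F | IsFace A F}, x ^ (n - sdim (flatSpan A F)) :=
        finsum_mem_congr rfl fun F hF => by rw [hF.sdim_flatSpan hA hT]
    _ = ∑ᶠ X ∈ flats A, (chamberCount A X : ℤ) * x ^ (n - sdim X) :=
        finsum_mem_comp_eq (finite_setOf_isFace hA.1) (finite_flats hA.1)
          (fun _ hF => hF.flatSpan_mem_flats) fun X => x ^ (n - sdim X)

theorem IsDA.finsum_mem_chamberCount_mul_neg_one_pow (hA : IsDA n T A) (hT : IsSimanifold n T)
    (hY : Y ∈ flats A) :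
    ∑ᶠ Z ∈ {Z ∈ flats A | Z ⊆ Y}, (chamberCount A Z : ℤ) * (-1) ^ sdim Z = (-1) ^ sdim Y := by
  have hmaps : MapsTo (flatSpan A) {F | IsFace A F ∧ F ⊆ Y} {Z ∈ flats A | Z ⊆ Y} :=
    fun F hF => ⟨hF.1.flatSpan_mem_flats, (flatSpan_subset_iff hF.1.subset hY).2 hF.2⟩
  have hcount (Z) (hZ : Z ∈ {Z ∈ flats A | Z ⊆ Y}) :
      chamberCount A Z = {F ∈ {F | IsFace A F ∧ F ⊆ Y} | flatSpan A F = Z}.ncard := by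
    refine congrArg ncard (ext fun F => ⟨fun hF => ⟨⟨hF.1, ?_⟩, hF.2⟩, fun hF => ⟨hF.1.1, hF.2⟩⟩)
    exact (flatSpan_subset_iff hF.1.subset hY).1 (hF.2.trans_subset hZ.2)
  calc ∑ᶠ Z ∈ {Z ∈ flats A | Z ⊆ Y}, (chamberCount A Z : ℤ) * (-1) ^ sdim Z
      = ∑ᶠ F ∈ {F | IsFace A F ∧ F ⊆ Y}, (-1 : ℤ) ^ sdim (flatSpan A F) := by
        rw [finsum_mem_comp_eq ((finite_setOf_isFace hA.1).subset fun _ hF => hF.1)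
          ((finite_flats hA.1).subset (sep_subset _ _)) hmaps fun Z => (-1 : ℤ) ^ sdim Z]
        exact finsum_mem_congr rfl fun Z hZ => by rw [hcount Z hZ]
    _ = ∑ᶠ F ∈ {F | IsFace A F ∧ F ⊆ Y}, (-1 : ℤ) ^ sdim F :=
        finsum_mem_congr rfl fun F hF => by rw [hF.1.sdim_flatSpan hA hT]
    _ = (-1) ^ sdim Y := hA.finsum_mem_face_neg_one_pow_sdim hT hY

theorem IsMobius.finsum_mem_mul_neg_one_pow_sdim {mu : Set (Euc N) → Set (Euc N) → ℤ}
    (hmu : IsMobius (flats A) mu) (hA : IsDA n T A) (hT : IsSimanifold n T) (hX : X ∈ flats A) :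
    ∑ᶠ Y ∈ flats A, mu X Y * (-1) ^ sdim Y = (chamberCount A X : ℤ) * (-1) ^ sdim X :=
  hmu.finsum_mem_mul (finite_flats hA.1)
    (fun _ hY => hA.finsum_mem_chamberCount_mul_neg_one_pow hT hY) hX

theorem IsMobius.chamberCount_mul_pow {mu : Set (Euc N) → Set (Euc N) → ℤ}
    (hmu : IsMobius (flats A) mu) (hA : IsDA n T A) (hT : IsSimanifold n T) (hX : X ∈ flats A)
    (x : ℤ) : (chamberCount A X : ℤ) * x ^ (n - sdim X) =
      (-1) ^ n * (-x) ^ (n - sdim X) * ∑ᶠ Y ∈ flats A, mu X Y * (-1) ^ sdim Y := by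
  have hsign : (-1 : ℤ) ^ n * (-1) ^ sdim X * (-1) ^ (n - sdim X) = 1 := by
    rw [mul_assoc, pow_mul_pow_sub _ (hA.sdim_le hT hX), ← mul_pow, neg_one_mul, neg_neg, one_pow]
  rw [hmu.finsum_mem_mul_neg_one_pow_sdim hA hT hX, neg_pow x]
  linear_combination (-(chamberCount A X : ℤ) * x ^ (n - sdim X)) * hsign

theorem sub_sdim_le_sSup (hX : X ∈ flats A) :
    n - sdim X ≤ sSup {k | ∃ X ∈ flats A, k = n - sdim X} := by
  refine le_csSup ⟨n, ?_⟩ ⟨X, hX, rfl⟩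
  rintro k ⟨Z, -, rfl⟩
  exact Nat.sub_le _ _

end Face

/-- f-polynomial of a DA: `f_A(x) = (−1)^{rk A} M_A(−x, −1)`, where
`f_A(x) = Σ_{i=0}^n f_i(A) x^{n−i}` and
`M_A(x,y) = Σ_{X,Y ∈ L_A} μ(X,Y) x^{rk X} y^{rk A − rk Y}` with `rk X = n − dim X` and
`rk A = max rk`.  The Möbius function `μ` of `L_A` is characterized by the hypotheses
(`μ(X,Y) = 0` for `X ≰ Y`, i.e. `Y ⊄ X`). -/
theorem f_polynomial_of_DA {N n : ℕ} (hn : 1 ≤ n) {T : Set (Euc N)}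
    (hT : IsSimanifold n T) (A : Set (Dehyperplane N n T)) (hA : IsDA n T A)
    (mu : Set (Euc N) → Set (Euc N) → ℤ)
    (hmu0 : ∀ X ∈ flats A, ∀ Y ∈ flats A, ¬ Y ⊆ X → mu X Y = 0)
    (hmu1 : ∀ X ∈ flats A, mu X X = 1)
    (hmu2 : ∀ X ∈ flats A, ∀ Y ∈ flats A, Y ⊆ X → Y ≠ X →
      ∑ᶠ Z ∈ {Z ∈ flats A | Z ⊆ X ∧ Y ⊆ Z}, mu X Z = 0)
    (r : ℕ) (hr : r = sSup {k | ∃ X ∈ flats A, k = n - sdim X}) :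
    ∀ x : ℤ,
      (∑ i ∈ Finset.range (n + 1),
          (Set.ncard {F | IsFace A F ∧ sdim F = i} : ℤ) * x ^ (n - i)) =
        (-1 : ℤ) ^ r * ∑ᶠ X ∈ flats A, ∑ᶠ Y ∈ flats A,
          mu X Y * (-x) ^ (n - sdim X) * (-1 : ℤ) ^ (r - (n - sdim Y)) := by
  intro x
  have hmu : IsMobius (flats A) mu := ⟨hmu0, hmu1, hmu2⟩
  have hsign : ∀ Y ∈ flats A,
      (-1 : ℤ) ^ r * (-1) ^ (r - (n - sdim Y)) = (-1) ^ n * (-1) ^ sdim Y := fun Y hY =>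
    neg_one_pow_mul_neg_one_pow_sub (hA.sdim_le hT hY) (hr ▸ sub_sdim_le_sSup hY)
  rw [hA.sum_ncard_isFace_mul_pow hT, mul_finsum_mem]
  refine finsum_mem_congr rfl fun X hX => ?_
  rw [hmu.chamberCount_mul_pow hA hT hX, mul_finsum_mem, mul_finsum_mem]
  refine finsum_mem_congr rfl fun Y hY => ?_
  linear_combination (-mu X Y * (-x) ^ (n - sdim X)) * hsign Y hY
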